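/- For every integer D with D ≡ 0 or 1 (mod 4) and D < 0, there exists a set of primes 𝒫_D which is a union of congruence classes modulo |D| and has natural density 1/2 in the primes, such that, setting 𝒫_D* = 𝒫_D ∪ {p prime : p ∣ D} and 𝒬_D = 𝒫 ∖ 𝒫_D*, there is a constant C(D) with the following property: for every PDBQF f of discriminant D and every positive integer n, R_f(n) ≤ C(D)·τ_D(n)·Σ_{m ∈ ⟨𝒬_D⟩, m² ∣ n} 1_{⟨𝒫_D*⟩}(n/m²). -/

import Mathlib

open Filter
open scoped Classical

structure PDBQF where
  a : ℤ
  b : ℤ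
  c : ℤ
  disc_neg : b ^ 2 - 4 * a * c < 0

def PDBQF.disc (f : PDBQF) : ℤ := f.b ^ 2 - 4 * f.a * f.c

def PDBQF.form (f : PDBQF) (x y : ℤ) : ℤ := f.a * x ^ 2 + f.b * x * y + f.c * y ^ 2

noncomputable def PDBQF.R (f : PDBQF) (n : ℤ) : ℕ :=
  Set.ncard {p : ℤ × ℤ | f.form p.1 p.2 = n}

/-- n lies in ⟨𝒜⟩, i.e. all prime factors of n lie in 𝒜. -/
def inSpan (A : Set ℕ) (n : ℕ) : Prop := ∀ p : ℕ, p.Prime → p ∣ n → p ∈ A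

/-!
The residue of `ζ` at `1` and the non-vanishing of Dirichlet `L`-functions on `Re s = 1` give, by
the Wiener–Ikehara theorem, the equidistribution of primes among the unit classes modulo `|D|`.
For `D < 0` the Kronecker symbol `(D/·)` is an odd function of the class, so that exactly half of
these classes consist of split primes.

To bound `R_f(n)`, colour the representations `u` of `n` at each prime `p ∣ n` so that `u` and `v`
of equal colour span a lattice of index divisible by `p ^ v_p(n)`, up to a factor `D`. Removing
the largest power `p ^ j` dividing `u` leaves a vector primitive at `p` on an isotropic line of
`f` modulo `p ^ (v_p(n) - 2j)`. If `p` is inert there is no such line unless `v_p(n) = 2j`, so one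
colour suffices and `v_p(n)` is even; if `p` splits there are two lines modulo `p`, each lifting
uniquely by Hensel's lemma, and `v_p(n) + 1` colours suffice; if `p ∣ D` the surplus of colours is
bounded in terms of `D`. Representations that agree in all colours satisfy `n ∣ D · det(u, v)`,
and then the identity `B(u, v)² - D · det(u, v)² = 4 f(u) f(v)` for the polar form `B` turns them
into integral points on the ellipse `β² - Dγ² = 4D²`, of which there are at most `(4|D| + 1)²`.
-/

section FejerKernel

open MeasureTheory

/-- The Fejér kernel `2 (1 - cos w) / w ^ 2`, encoded as the Fourier transform of the tent function
`1 - |t|` on `[-1, 1]`, so that it is continuous at `w = 0` without a case distinction. -/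
noncomputable def fejerKernel (w : ℝ) : ℝ :=
  ∫ t in (-1 : ℝ)..1, (1 - |t|) * Real.cos (w * t)

lemma continuous_fejerKernel : Continuous fejerKernel :=
  intervalIntegral.continuous_parametric_intervalIntegral_of_continuous' (by fun_prop) _ _

lemma fejerKernel_eq_two_mul_integral (w : ℝ) :
    fejerKernel w = 2 * ∫ t in (0 : ℝ)..1, (1 - t) * Real.cos (w * t) := by
  have right_half : ∫ t in (0 : ℝ)..1, (1 - |t|) * Real.cos (w * t) =
      ∫ t in (0 : ℝ)..1, (1 - t) * Real.cos (w * t) := by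
    refine intervalIntegral.integral_congr fun t ht => ?_
    rw [Set.uIcc_of_le zero_le_one] at ht
    simp only [abs_of_nonneg ht.1]
  have left_half : ∫ t in (-1 : ℝ)..0, (1 - |t|) * Real.cos (w * t) =
      ∫ t in (0 : ℝ)..1, (1 - |t|) * Real.cos (w * t) := by
    simpa using (intervalIntegral.integral_comp_neg (a := (0 : ℝ)) (b := 1)
      fun t => (1 - |t|) * Real.cos (w * t)).symm
  rw [fejerKernel, ← intervalIntegral.integral_add_adjacent_intervals (b := 0), left_half,
    right_half, two_mul]
  all_goals exact Continuous.intervalIntegrable (by fun_prop) _ _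

lemma fejerKernel_zero : fejerKernel 0 = 1 := by
  have tent_area : ∫ t in (0 : ℝ)..1, (1 - t) = 1 / 2 := by
    rw [intervalIntegral.integral_sub (by simp) (by simp)]
    norm_num
  simp [fejerKernel_eq_two_mul_integral, tent_area]

lemma fejerKernel_of_ne_zero {w : ℝ} (hw : w ≠ 0) :
    fejerKernel w = 2 * (1 - Real.cos w) / w ^ 2 := by
  have primitive (t : ℝ) : HasDerivAt
      (fun t => (1 - t) * Real.sin (w * t) / w - Real.cos (w * t) / w ^ 2)
      ((1 - t) * Real.cos (w * t)) t := by
    have inner : HasDerivAt (fun t => w * t) w t := by simpa using (hasDerivAt_id t).const_mul w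
    have tent : HasDerivAt (fun t : ℝ => 1 - t) (-1) t := by
      simpa using (hasDerivAt_id t).const_sub 1
    exact (((tent.mul inner.sin).div_const w).sub (inner.cos.div_const (w ^ 2))).congr_deriv
      (by field_simp; ring)
  rw [fejerKernel_eq_two_mul_integral,
    intervalIntegral.integral_eq_sub_of_hasDerivAt (fun t _ => primitive t)
      (Continuous.intervalIntegrable (by fun_prop) _ _)]
  simp
  ring

lemma fejerKernel_nonneg (w : ℝ) : 0 ≤ fejerKernel w := by
  rcases eq_or_ne w 0 with rfl | hw
  · simp [fejerKernel_zero]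
  · rw [fejerKernel_of_ne_zero hw]
    have := Real.cos_le_one w
    exact div_nonneg (by linarith) (sq_nonneg w)

lemma fejerKernel_le (w : ℝ) : fejerKernel w ≤ 8 * (1 + w ^ 2)⁻¹ := by
  rcases eq_or_ne w 0 with rfl | hw
  · norm_num [fejerKernel_zero]
  · rw [fejerKernel_of_ne_zero hw, ← div_eq_mul_inv,
      div_le_div_iff₀ (by positivity) (by positivity)]
    nlinarith [Real.neg_one_le_cos w, Real.one_sub_sq_div_two_le_cos (x := w), sq_nonneg w]

lemma integrable_fejerKernel : Integrable fejerKernel :=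
  (integrable_inv_one_add_sq.const_mul 8).mono' continuous_fejerKernel.aestronglyMeasurable <|
    .of_forall fun w => by
      rw [Real.norm_of_nonneg (fejerKernel_nonneg w)]
      exact fejerKernel_le w

lemma integral_fejerKernel_pos : 0 < ∫ w, fejerKernel w := by
  rw [integral_pos_iff_support_of_nonneg fejerKernel_nonneg integrable_fejerKernel]
  exact continuous_fejerKernel.isOpen_support.measure_pos _ ⟨0, by simp [fejerKernel_zero]⟩

lemma integral_tent_mul_exp (w : ℝ) :
    ∫ t in (-1 : ℝ)..1, ((1 - |t| : ℝ) : ℂ) * Complex.exp (Complex.I * w * t) =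
      fejerKernel w := by
  have sine_part : ∫ t in (-1 : ℝ)..1, (1 - |t|) * Real.sin (w * t) = 0 := by
    have := intervalIntegral.integral_comp_neg (a := (-1 : ℝ)) (b := 1)
      fun t => (1 - |t|) * Real.sin (w * t)
    simp only [abs_neg, mul_neg, Real.sin_neg, intervalIntegral.integral_neg, neg_neg] at this
    linarith
  have euler (t : ℝ) : ((1 - |t| : ℝ) : ℂ) * Complex.exp (Complex.I * w * t) =
      (((1 - |t|) * Real.cos (w * t) : ℝ) : ℂ) +
        Complex.I * (((1 - |t|) * Real.sin (w * t) : ℝ) : ℂ) := by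
    rw [show Complex.I * w * t = ((w * t : ℝ) : ℂ) * Complex.I by push_cast; ring,
      Complex.exp_mul_I]
    push_cast
    ring
  simp_rw [euler]
  rw [intervalIntegral.integral_add, intervalIntegral.integral_const_mul,
    intervalIntegral.integral_ofReal, intervalIntegral.integral_ofReal, sine_part,
    Complex.ofReal_zero, mul_zero, add_zero, fejerKernel]
  all_goals exact Continuous.intervalIntegrable (by fun_prop) _ _

lemma norm_tent_mul_exp_le_one (y : ℝ) {t : ℝ} (ht : t ∈ Set.Ioc (-1 : ℝ) 1) :
    ‖((1 - |t| : ℝ) : ℂ) * Complex.exp (Complex.I * y * t)‖ ≤ 1 := by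
  have ht' : |t| ≤ 1 := abs_le.2 ⟨ht.1.le, ht.2⟩
  rw [norm_mul, show Complex.I * y * (t : ℂ) = ((y * t : ℝ) : ℂ) * Complex.I by push_cast; ring,
    Complex.norm_exp_ofReal_mul_I, Complex.norm_real, mul_one,
    Real.norm_of_nonneg (by linarith)]
  linarith [abs_nonneg t]

lemma le_integral_mul_fejerKernel {φ : ℝ → ℝ} (hφ : Measurable φ) {M : ℝ} (hM : ∀ v, |φ v| ≤ M)
    {η L y : ℝ} (hL : 0 ≤ L) (hη : ∀ v ∈ Set.Icc (y - L) (y + L), η ≤ φ v) :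
    (η + M) * (∫ w in (-L)..L, fejerKernel w) - M * ∫ w, fejerKernel w ≤
      ∫ v, φ v * fejerKernel (y - v) := by
  have truncated : Integrable ((Set.Ioc (-L) L).indicator fejerKernel) :=
    integrable_fejerKernel.indicator measurableSet_Ioc
  have reflected : ∫ v, φ v * fejerKernel (y - v) = ∫ w, φ (y - w) * fejerKernel w := by
    rw [← integral_sub_left_eq_self _ volume y]
    simp only [sub_sub_cancel]
  have minorant (w : ℝ) : (η + M) * (Set.Ioc (-L) L).indicator fejerKernel w -
      M * fejerKernel w ≤ φ (y - w) * fejerKernel w := by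
    have := fejerKernel_nonneg w
    by_cases hw : w ∈ Set.Ioc (-L) L
    · have := hη (y - w) ⟨by linarith [hw.2], by linarith [hw.1]⟩
      rw [Set.indicator_of_mem hw]
      nlinarith
    · have := (abs_le.1 (hM (y - w))).1
      rw [Set.indicator_of_notMem hw]
      nlinarith
  have integrable_right : Integrable fun w => φ (y - w) * fejerKernel w :=
    integrable_fejerKernel.bdd_mul
      (by fun_prop : Measurable fun w => φ (y - w)).aestronglyMeasurable
      (.of_forall fun w => hM (y - w))
  rw [reflected, intervalIntegral.integral_of_le (by linarith),
    ← integral_indicator measurableSet_Ioc, ← integral_const_mul, ← integral_const_mul,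
    ← integral_sub (truncated.const_mul _) (integrable_fejerKernel.const_mul _)]
  exact integral_mono ((truncated.const_mul _).sub (integrable_fejerKernel.const_mul _))
    integrable_right minorant

end FejerKernel

section Tauberian

open MeasureTheory Topology

/-- `φ` is a bounded measurable function supported on `[0, ∞)`, and its Laplace transform, which
converges on the open right half-plane, agrees there with a function `H` that is continuous up to
the imaginary axis. This is the analytic input of the Wiener–Ikehara theorem. -/
structure HasLaplaceExtension (φ : ℝ → ℝ) (H : ℂ → ℂ) : Prop where
  measurable : Measurable φ
  bounded : ∃ M, ∀ v, |φ v| ≤ M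
  eq_zero_of_neg : ∀ v < 0, φ v = 0
  continuousOn : ContinuousOn H {z | 0 ≤ z.re}
  integral_eq : ∀ z : ℂ, 0 < z.re → ∫ v : ℝ, (φ v : ℂ) * Complex.exp (-z * v) = H z

namespace HasLaplaceExtension

variable {φ : ℝ → ℝ} {H : ℂ → ℂ}

lemma neg (h : HasLaplaceExtension φ H) : HasLaplaceExtension (fun v => -φ v) (fun z => -H z) where
  measurable := h.measurable.neg
  bounded := by simpa using h.bounded
  eq_zero_of_neg v hv := by simp [h.eq_zero_of_neg v hv]
  continuousOn := h.continuousOn.neg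
  integral_eq z hz := by
    rw [← h.integral_eq z hz, ← integral_neg]
    simp

lemma comp_div (h : HasLaplaceExtension φ H) {T : ℝ} (hT : 0 < T) :
    HasLaplaceExtension (fun v => φ (v / T)) (fun z => T * H (T * z)) where
  measurable := h.measurable.comp (measurable_id.div_const T)
  bounded := h.bounded.imp fun _ hM v => hM (v / T)
  eq_zero_of_neg v hv := h.eq_zero_of_neg _ (div_neg_of_neg_of_pos hv hT)
  continuousOn := by
    refine continuousOn_const.mul (h.continuousOn.comp (by fun_prop) fun z hz => ?_)
    simpa using mul_nonneg hT.le hz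
  integral_eq z hz := by
    have hT' : (T : ℂ) ≠ 0 := by exact_mod_cast hT.ne'
    rw [← h.integral_eq (T * z) (by simpa using mul_pos hT hz), ← Complex.real_smul,
      ← abs_of_pos hT, ← Measure.integral_comp_div, abs_of_pos hT]
    congr! 3 with v
    push_cast
    field_simp

lemma integrable_mul_exp (h : HasLaplaceExtension φ H) {δ : ℝ} (hδ : 0 < δ) :
    Integrable fun v : ℝ => φ v * Real.exp (-δ * v) := by
  obtain ⟨M, hM⟩ := h.bounded
  have damped : IntegrableOn (fun v : ℝ => φ v * Real.exp (-δ * v)) (Set.Ioi 0) :=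
    (integrableOn_exp_mul_Ioi (by linarith) 0).bdd_mul h.measurable.aestronglyMeasurable
      (.of_forall hM)
  rw [← integrableOn_Ici_iff_integrableOn_Ioi] at damped
  refine damped.integrable_of_forall_notMem_eq_zero fun v hv => ?_
  rw [h.eq_zero_of_neg v (not_le.1 hv), zero_mul]

lemma tent_mul_exp_mul_eq_integral (h : HasLaplaceExtension φ H) (y t : ℝ) {δ : ℝ} (hδ : 0 < δ) :
    ((1 - |t| : ℝ) : ℂ) * Complex.exp (Complex.I * y * t) * H (δ + t * Complex.I) =
      ∫ v : ℝ, ((φ v * Real.exp (-δ * v) : ℝ) : ℂ) *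
        (((1 - |t| : ℝ) : ℂ) * Complex.exp (Complex.I * (y - v : ℝ) * t)) := by
  rw [← h.integral_eq _ (by simpa using hδ), ← integral_const_mul]
  congr 1 with v
  push_cast
  rw [show -(δ + t * Complex.I) * (v : ℂ) = -δ * v + -(t * Complex.I * v) by ring,
    show Complex.I * (y - v) * t = Complex.I * y * t + -(t * Complex.I * v) by ring,
    Complex.exp_add, Complex.exp_add]
  ring

lemma integral_tent_mul_exp_mul (h : HasLaplaceExtension φ H) (y : ℝ) {δ : ℝ} (hδ : 0 < δ) :
    ∫ t in (-1 : ℝ)..1,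
        ((1 - |t| : ℝ) : ℂ) * Complex.exp (Complex.I * y * t) * H (δ + t * Complex.I) =
      ((∫ v, φ v * Real.exp (-δ * v) * fejerKernel (y - v) : ℝ) : ℂ) := by
  have hφ := h.measurable
  have integrable_uncurried : Integrable (Function.uncurry fun t v : ℝ =>
      ((φ v * Real.exp (-δ * v) : ℝ) : ℂ) *
        (((1 - |t| : ℝ) : ℂ) * Complex.exp (Complex.I * (y - v : ℝ) * t)))
      ((volume.restrict (Set.Ioc (-1 : ℝ) 1)).prod volume) := by
    refine ((integrable_const (1 : ℂ)).mul_prod (h.integrable_mul_exp hδ).ofReal).mono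
      (Measurable.aestronglyMeasurable (by unfold Function.uncurry; fun_prop)) ?_
    filter_upwards [Measure.quasiMeasurePreserving_fst.ae (ae_restrict_mem measurableSet_Ioc)]
      with p hp
    rw [Function.uncurry, norm_mul, mul_comm, one_mul]
    exact mul_le_of_le_one_left (norm_nonneg _) (norm_tent_mul_exp_le_one _ hp)
  simp_rw [h.tent_mul_exp_mul_eq_integral y _ hδ]
  rw [intervalIntegral.integral_of_le (by norm_num), integral_integral_swap integrable_uncurried,
    ← integral_complex_ofReal]
  congr 1 with v
  rw [integral_const_mul, ← intervalIntegral.integral_of_le (by norm_num), integral_tent_mul_exp]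
  push_cast
  rfl

lemma tendsto_integral_tent_mul_exp_mul (h : HasLaplaceExtension φ H) (y : ℝ) :
    Tendsto (fun δ : ℝ => ∫ t in (-1 : ℝ)..1,
        ((1 - |t| : ℝ) : ℂ) * Complex.exp (Complex.I * y * t) * H (δ + t * Complex.I))
      (𝓝[>] 0) (𝓝 (∫ t in (-1 : ℝ)..1,
        ((1 - |t| : ℝ) : ℂ) * Complex.exp (Complex.I * y * t) * H (t * Complex.I))) := by
  have rectangle_compact : IsCompact ((fun p : ℝ × ℝ => (p.1 + p.2 * Complex.I : ℂ)) ''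
      (Set.Icc 0 1 ×ˢ Set.Icc (-1) 1)) :=
    (isCompact_Icc.prod isCompact_Icc).image (by fun_prop)
  obtain ⟨C, hC⟩ := rectangle_compact.exists_bound_of_continuousOn <| h.continuousOn.mono <| by
    rintro _ ⟨p, hp, rfl⟩
    simpa using hp.1.1
  have δ_small : ∀ᶠ δ : ℝ in 𝓝[>] 0, δ ∈ Set.Ioc (0 : ℝ) 1 := Ioc_mem_nhdsGT zero_lt_one
  refine intervalIntegral.tendsto_integral_filter_of_dominated_convergence (fun _ => C)
    ?_ ?_ (by simp) (.of_forall fun t _ => ?_)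
  · filter_upwards [δ_small] with δ hδ
    have : Continuous fun t : ℝ => H (δ + t * Complex.I) :=
      h.continuousOn.comp_continuous (by fun_prop) fun t => by simpa using hδ.1.le
    exact (Continuous.mul (by fun_prop) this).aestronglyMeasurable
  · filter_upwards [δ_small] with δ hδ
    refine .of_forall fun t ht => ?_
    rw [Set.uIoc_of_le (by norm_num)] at ht
    have hHC : ‖H (δ + t * Complex.I)‖ ≤ C :=
      hC _ ⟨(δ, t), ⟨⟨hδ.1.le, hδ.2⟩, ht.1.le, ht.2⟩, rfl⟩
    rw [norm_mul]
    exact (mul_le_of_le_one_left (norm_nonneg _) (norm_tent_mul_exp_le_one y ht)).trans hHC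
  · refine .const_mul _ <| (h.continuousOn (t * Complex.I) (by simp)).tendsto.comp <|
      tendsto_nhdsWithin_iff.2 ⟨tendsto_nhdsWithin_of_tendsto_nhds ?_, ?_⟩
    · exact Continuous.tendsto' (by fun_prop) _ _ (by simp)
    · filter_upwards [δ_small] with δ hδ
      simpa using hδ.1.le

lemma tendsto_integral_mul_exp_mul_fejerKernel (h : HasLaplaceExtension φ H) (y : ℝ) :
    Tendsto (fun δ : ℝ => ∫ v, φ v * Real.exp (-δ * v) * fejerKernel (y - v))
      (𝓝[>] 0) (𝓝 (∫ v, φ v * fejerKernel (y - v))) := by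
  obtain ⟨M, hM⟩ := h.bounded
  have hφ := h.measurable
  have hk := continuous_fejerKernel.measurable
  refine tendsto_integral_filter_of_dominated_convergence (fun v => M * fejerKernel (y - v))
    (.of_forall fun δ => Measurable.aestronglyMeasurable (by fun_prop)) ?_
    ((integrable_fejerKernel.comp_sub_left y).const_mul M) (.of_forall fun v => ?_)
  · filter_upwards [self_mem_nhdsWithin] with δ (hδ : 0 < δ)
    refine .of_forall fun v => ?_
    rw [norm_mul, norm_mul, Real.norm_of_nonneg (fejerKernel_nonneg _), Real.norm_eq_abs,
      Real.norm_of_nonneg (Real.exp_pos _).le]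
    refine mul_le_mul_of_nonneg_right ?_ (fejerKernel_nonneg _)
    rcases lt_or_ge v 0 with hv | hv
    · simpa [h.eq_zero_of_neg v hv] using (abs_nonneg _).trans (hM v)
    · exact (mul_le_of_le_one_right (abs_nonneg _)
        (Real.exp_le_one_iff.2 (by nlinarith))).trans (hM v)
  · exact tendsto_nhdsWithin_of_tendsto_nhds (Continuous.tendsto' (by fun_prop) _ _ (by simp))

lemma integral_tent_mul_exp_mul_boundary (h : HasLaplaceExtension φ H) (y : ℝ) :
    ∫ t in (-1 : ℝ)..1,
        ((1 - |t| : ℝ) : ℂ) * Complex.exp (Complex.I * y * t) * H (t * Complex.I) =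
      ((∫ v, φ v * fejerKernel (y - v) : ℝ) : ℂ) := by
  refine tendsto_nhds_unique (h.tendsto_integral_tent_mul_exp_mul y) <|
    (Complex.continuous_ofReal.continuousAt.tendsto.comp
      (h.tendsto_integral_mul_exp_mul_fejerKernel y)).congr' ?_
  filter_upwards [self_mem_nhdsWithin] with δ hδ
  exact (h.integral_tent_mul_exp_mul y hδ).symm

theorem tendsto_integral_mul_fejerKernel (h : HasLaplaceExtension φ H) :
    Tendsto (fun y : ℝ => ∫ v, φ v * fejerKernel (y - v)) atTop (𝓝 0) := by
  have riemann_lebesgue := Real.tendsto_integral_exp_smul_cocompact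
    ((Set.Ioc (-1 : ℝ) 1).indicator fun t : ℝ => ((1 - |t| : ℝ) : ℂ) * H (t * Complex.I))
  have frequency : Tendsto (fun y : ℝ => -y / (2 * Real.pi)) atTop (cocompact ℝ) :=
    (tendsto_neg_atTop_atBot.atBot_div_const (by positivity)).mono_right atBot_le_cocompact
  have complex_limit : Tendsto (fun y : ℝ => ((∫ v, φ v * fejerKernel (y - v) : ℝ) : ℂ))
      atTop (𝓝 0) := by
    refine (riemann_lebesgue.comp frequency).congr fun y => ?_
    rw [← h.integral_tent_mul_exp_mul_boundary, intervalIntegral.integral_of_le (by norm_num),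
      ← integral_indicator measurableSet_Ioc, Function.comp_apply]
    congr 1 with t
    by_cases ht : t ∈ Set.Ioc (-1 : ℝ) 1
    · have phase : 2 * Real.pi * -(t * (-y / (2 * Real.pi))) = t * y := by field_simp
      rw [Set.indicator_of_mem ht, Set.indicator_of_mem ht, Circle.smul_def,
        Real.fourierChar_apply, smul_eq_mul, phase, Complex.ofReal_mul,
        show (t : ℂ) * y * Complex.I = Complex.I * y * t by ring]
      ring
    · rw [Set.indicator_of_notMem ht, Set.indicator_of_notMem ht, smul_zero]
  simpa [Function.comp_def] using (Complex.continuous_re.tendsto 0).comp complex_limit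

/-- If `φ ≥ η` on `[y - r, y + r]`, then the Fejér mean of `φ` at `y`, at a scale so fine that most
of the mass of the kernel sits in that interval, is bounded below; but these means tend to `0`. -/
theorem eventually_exists_lt (h : HasLaplaceExtension φ H) {η r : ℝ} (hη : 0 < η) (hr : 0 < r) :
    ∀ᶠ y in atTop, ∃ v ∈ Set.Icc (y - r) (y + r), φ v < η := by
  obtain ⟨M, hM⟩ := h.bounded
  set I := ∫ w, fejerKernel w
  have I_pos : 0 < I := integral_fejerKernel_pos
  have truncations : Tendsto (fun L : ℝ => (η + M) * ∫ w in (-L)..L, fejerKernel w) atTop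
      (𝓝 ((η + M) * I)) :=
    (intervalIntegral_tendsto_integral integrable_fejerKernel tendsto_neg_atTop_atBot
      tendsto_id).const_mul _
  obtain ⟨L, hL, L_pos⟩ := ((truncations.eventually
    (lt_mem_nhds (by nlinarith : (M + η / 2) * I < (η + M) * I))).and
    (eventually_gt_atTop 0)).exists
  have T_pos : 0 < L / r := by positivity
  have means_small := (h.comp_div T_pos).tendsto_integral_mul_fejerKernel.eventually
    (gt_mem_nhds (by positivity : 0 < η / 2 * I))
  filter_upwards [(tendsto_id.const_mul_atTop T_pos).eventually means_small] with y hy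
  by_contra! large
  have mean_large := le_integral_mul_fejerKernel (h.comp_div T_pos).measurable (fun v => hM _)
    (η := η) (y := L / r * y) L_pos.le fun v hv => large _ ?_
  · simp only [id] at hy
    linarith
  · rw [Set.mem_Icc, le_div_iff₀ T_pos, div_le_iff₀ T_pos, sub_mul, add_mul,
      mul_div_cancel₀ L hr.ne', mul_comm y]
    exact hv

end HasLaplaceExtension

variable {S : ℝ → ℝ}

lemma mul_exp_neg_mul_one_sub_le (hS : Monotone S) (hS0 : ∀ v, 0 ≤ S v) {u v r : ℝ}
    (huv : u ≤ v) (hvu : v ≤ u + r) :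
    S u * Real.exp (-u) * (1 - r) ≤ S v * Real.exp (-v) := by
  have slow : Real.exp (-u) * (1 - r) ≤ Real.exp (-v) := calc
    Real.exp (-u) * (1 - r) ≤ Real.exp (-u) * Real.exp (-(v - u)) := by
      gcongr
      linarith [Real.add_one_le_exp (-(v - u))]
    _ = Real.exp (-v) := by rw [← Real.exp_add]; ring_nf
  calc S u * Real.exp (-u) * (1 - r) = S u * (Real.exp (-u) * (1 - r)) := mul_assoc _ _ _
    _ ≤ S v * Real.exp (-v) :=
      (mul_le_mul_of_nonneg_left slow (hS0 u)).trans
        (mul_le_mul_of_nonneg_right (hS huv) (Real.exp_pos _).le)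

theorem tendsto_mul_exp_neg_of_hasLaplaceExtension (hS : Monotone S) (hS0 : ∀ v, 0 ≤ S v)
    {c : ℝ} {H : ℂ → ℂ}
    (h : HasLaplaceExtension ((Set.Ioi 0).indicator fun v => S v * Real.exp (-v) - c) H) :
    Tendsto (fun v => S v * Real.exp (-v)) atTop (𝓝 c) := by
  refine Metric.tendsto_nhds.2 fun η hη => ?_
  set r := η / (8 * (|c| + η)) with hr
  have r_pos : 0 < r := by positivity
  have r_small : 2 * r * (|c| + η) = η / 4 := by rw [hr]; field_simp; norm_num
  have r_lt : 2 * r < 1 := by nlinarith [abs_nonneg c]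
  have not_high := (tendsto_atTop_add_const_right _ r tendsto_id).eventually
    (h.eventually_exists_lt (half_pos hη) r_pos)
  have not_low := (tendsto_atTop_add_const_right _ (-r) tendsto_id).eventually
    (h.neg.eventually_exists_lt (half_pos hη) r_pos)
  filter_upwards [not_high, not_low, eventually_gt_atTop (2 * r)] with y high low hy
  obtain ⟨v, ⟨hyv, hvy⟩, hv⟩ := high
  obtain ⟨u, ⟨hyu, huy⟩, hu⟩ := low
  simp only [id] at hyv hvy hyu huy
  rw [Set.indicator_of_mem (show v ∈ Set.Ioi (0 : ℝ) from by simp; linarith)] at hv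
  rw [Set.indicator_of_mem (show u ∈ Set.Ioi (0 : ℝ) from by simp; linarith)] at hu
  have growth_right := mul_exp_neg_mul_one_sub_le hS hS0 (u := y) (v := v) (r := 2 * r)
    (by linarith) (by linarith)
  have growth_left := mul_exp_neg_mul_one_sub_le hS hS0 (u := u) (v := y) (r := 2 * r)
    (by linarith) (by linarith)
  have := le_abs_self c
  have := neg_abs_le c
  rw [Real.dist_eq, abs_lt]
  constructor <;> nlinarith

end Tauberian

section WienerIkehara

open MeasureTheory Topology

variable {f : ℕ → ℝ} {K : ℝ}

lemma monotone_sum_Icc (hf : ∀ n, 0 ≤ f n) : Monotone fun N : ℕ => ∑ k ∈ Finset.Icc 1 N, f k :=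
  fun _ _ hmn => Finset.sum_le_sum_of_subset_of_nonneg (Finset.Icc_subset_Icc_right hmn)
    fun _ _ _ => hf _

lemma sum_Icc_floor_exp_mul_exp_neg_le (hf : ∀ n, 0 ≤ f n)
    (hK : ∀ N : ℕ, ∑ k ∈ Finset.Icc 1 N, f k ≤ K * N) (v : ℝ) :
    (∑ k ∈ Finset.Icc 1 ⌊Real.exp v⌋₊, f k) * Real.exp (-v) ≤ K := by
  have K_nonneg : 0 ≤ K := by simpa using (hf 1).trans (by simpa using hK 1)
  calc (∑ k ∈ Finset.Icc 1 ⌊Real.exp v⌋₊, f k) * Real.exp (-v)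
      ≤ K * Real.exp v * Real.exp (-v) := by
        gcongr
        exact (hK _).trans (by gcongr; exact Nat.floor_le (Real.exp_pos v).le)
    _ = K := by rw [mul_assoc, ← Real.exp_add, add_neg_cancel, Real.exp_zero, mul_one]

lemma integral_sum_Icc_mul_cpow (f : ℕ → ℝ) (z : ℂ) :
    ∫ t in Set.Ioi (1 : ℝ), (∑ k ∈ Finset.Icc 1 ⌊t⌋₊, (f k : ℂ)) * (t : ℂ) ^ (-(1 + z + 1)) =
      ∫ v in Set.Ioi (0 : ℝ),
        (((∑ k ∈ Finset.Icc 1 ⌊Real.exp v⌋₊, f k) * Real.exp (-v) : ℝ) : ℂ) *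
          Complex.exp (-z * v) := by
  have exp_image : Real.exp '' Set.Ioi 0 = Set.Ioi 1 := by
    ext x
    constructor
    · rintro ⟨y, hy, rfl⟩
      exact Real.one_lt_exp_iff.2 hy
    · exact fun hx => ⟨Real.log x, Real.log_pos hx, Real.exp_log (one_pos.trans hx)⟩
  rw [← exp_image, integral_image_eq_integral_abs_deriv_smul (f' := Real.exp) measurableSet_Ioi
    (fun x _ => (Real.hasDerivAt_exp x).hasDerivWithinAt) Real.exp_injective.injOn]
  congr 1 with v
  rw [abs_of_pos (Real.exp_pos v), Complex.real_smul,
    Complex.cpow_def_of_ne_zero (by exact_mod_cast (Real.exp_pos v).ne'),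
    ← Complex.ofReal_log (Real.exp_pos v).le, Real.log_exp]
  push_cast
  rw [mul_comm, mul_assoc, mul_assoc, ← Complex.exp_add, ← Complex.exp_add]
  ring_nf

lemma integral_Ioi_sub_const_mul_exp {B : ℝ → ℝ} (hB : Measurable B) (hBK : ∀ v, |B v| ≤ K)
    (c : ℝ) {z : ℂ} (hz : 0 < z.re) :
    ∫ v in Set.Ioi (0 : ℝ), ((B v - c : ℝ) : ℂ) * Complex.exp (-z * v) =
      (∫ v in Set.Ioi (0 : ℝ), (B v : ℂ) * Complex.exp (-z * v)) - c / z := by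
  have exp_integrable : IntegrableOn (fun v : ℝ => Complex.exp (-z * v)) (Set.Ioi 0) :=
    integrableOn_exp_mul_complex_Ioi (by simpa using hz) 0
  have B_integrable : IntegrableOn (fun v : ℝ => (B v : ℂ) * Complex.exp (-z * v)) (Set.Ioi 0) :=
    exp_integrable.bdd_mul (Complex.measurable_ofReal.comp hB).aestronglyMeasurable
      (.of_forall fun v => by simpa using hBK v)
  have exp_integral : ∫ v in Set.Ioi (0 : ℝ), (c : ℂ) * Complex.exp (-z * v) = c / z := by
    rw [integral_const_mul, integral_exp_mul_complex_Ioi (by simpa using hz)]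
    simp [div_eq_mul_inv]
  rw [← exp_integral, ← integral_sub B_integrable (exp_integrable.const_mul _)]
  push_cast
  simp_rw [sub_mul]

lemma hasLaplaceExtension_indicator_sub_const {B : ℝ → ℝ} (hB : Measurable B)
    (hBK : ∀ v, |B v| ≤ K) {c : ℝ} {H : ℂ → ℂ} (hH : ContinuousOn H {z | 0 ≤ z.re})
    (hHB : ∀ z : ℂ, 0 < z.re →
      ∫ v in Set.Ioi (0 : ℝ), (B v : ℂ) * Complex.exp (-z * v) = H z + c / z) :
    HasLaplaceExtension ((Set.Ioi 0).indicator fun v => B v - c) H := by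
  refine ⟨(hB.sub_const c).indicator measurableSet_Ioi, ⟨K + |c|, fun v => ?_⟩,
    fun v hv => Set.indicator_of_notMem (by simpa using hv.le) _, hH, fun z hz => ?_⟩
  · refine (norm_indicator_le_norm_self (fun v => B v - c) v).trans ((norm_sub_le _ _).trans ?_)
    gcongr
    exacts [hBK v, le_rfl]
  · have restrict : ∫ v : ℝ, (((Set.Ioi 0).indicator (fun v => B v - c) v : ℝ) : ℂ) *
          Complex.exp (-z * v) =
        ∫ v in Set.Ioi (0 : ℝ), ((B v - c : ℝ) : ℂ) * Complex.exp (-z * v) := by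
      rw [← integral_indicator measurableSet_Ioi]
      congr 1 with v
      by_cases hv : v ∈ Set.Ioi (0 : ℝ) <;> simp [hv]
    rw [restrict, integral_Ioi_sub_const_mul_exp hB hBK c hz, hHB z hz, add_sub_cancel_right]

lemma LSeries_eq_mul_integral_mul_exp (hf : ∀ n, 0 ≤ f n)
    (hK : ∀ N : ℕ, ∑ k ∈ Finset.Icc 1 N, f k ≤ K * N) {z : ℂ} (hz : 0 < z.re) :
    LSeries (fun n => f n) (1 + z) = (1 + z) * ∫ v in Set.Ioi (0 : ℝ),
      (((∑ k ∈ Finset.Icc 1 ⌊Real.exp v⌋₊, f k) * Real.exp (-v) : ℝ) : ℂ) *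
        Complex.exp (-z * v) := by
  rw [← integral_sum_Icc_mul_cpow]
  refine LSeries_eq_mul_integral_of_nonneg f zero_le_one (by simpa using hz) ?_ hf
  refine .of_bound K (.of_forall fun N => ?_)
  simpa [abs_of_nonneg (Finset.sum_nonneg fun k _ => hf k)] using hK N

lemma hasLaplaceExtension_of_LSeries (hf : ∀ n, 0 ≤ f n)
    (hK : ∀ N : ℕ, ∑ k ∈ Finset.Icc 1 N, f k ≤ K * N) {c : ℝ} {G : ℂ → ℂ}
    (hG : ContinuousOn G {s | 1 ≤ s.re})
    (hGf : Set.EqOn G (fun s => LSeries (fun n => f n) s - c / (s - 1)) {s | 1 < s.re}) :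
    HasLaplaceExtension ((Set.Ioi 0).indicator fun v =>
        (∑ k ∈ Finset.Icc 1 ⌊Real.exp v⌋₊, f k) * Real.exp (-v) - c)
      (fun z => (G (1 + z) - c) / (1 + z)) := by
  have one_add_ne_zero {z : ℂ} (hz : 0 ≤ z.re) : 1 + z ≠ 0 :=
    Complex.ne_zero_of_re_pos (by simp; linarith)
  refine hasLaplaceExtension_indicator_sub_const (K := K)
    (B := fun v => (∑ k ∈ Finset.Icc 1 ⌊Real.exp v⌋₊, f k) * Real.exp (-v))
    ?_ (fun v => ?_) ?_ fun z hz => ?_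
  · exact (((monotone_sum_Icc hf).comp Nat.floor_mono).comp Real.exp_monotone).measurable.mul
      (by fun_prop)
  · rw [abs_of_nonneg (mul_nonneg (Finset.sum_nonneg fun _ _ => hf _) (Real.exp_pos _).le)]
    exact sum_Icc_floor_exp_mul_exp_neg_le hf hK v
  · refine ((hG.comp (by fun_prop) fun z hz => ?_).sub continuousOn_const).div (by fun_prop)
      fun z hz => one_add_ne_zero hz
    simpa using hz
  · have G_eq : G (1 + z) = LSeries (fun n => f n) (1 + z) - c / z := by
      simpa using hGf (x := 1 + z) (by simpa using hz)
    have hz0 : z ≠ 0 := Complex.ne_zero_of_re_pos hz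
    have h1z := one_add_ne_zero hz.le
    rw [G_eq, LSeries_eq_mul_integral_mul_exp hf hK hz]
    field_simp
    ring

/-- The **Wiener–Ikehara theorem** for Dirichlet series satisfying a Chebyshev-type upper bound. -/
theorem tendsto_sum_div_of_LSeries_sub_continuousOn (hf : ∀ n, 0 ≤ f n)
    (hK : ∀ N : ℕ, ∑ k ∈ Finset.Icc 1 N, f k ≤ K * N) {c : ℝ} {G : ℂ → ℂ}
    (hG : ContinuousOn G {s | 1 ≤ s.re})
    (hGf : Set.EqOn G (fun s => LSeries (fun n => f n) s - c / (s - 1)) {s | 1 < s.re}) :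
    Tendsto (fun N : ℕ => (∑ k ∈ Finset.Icc 1 N, f k) / N) atTop (𝓝 c) := by
  have real_limit := tendsto_mul_exp_neg_of_hasLaplaceExtension
    (S := fun v => ∑ k ∈ Finset.Icc 1 ⌊Real.exp v⌋₊, f k)
    (((monotone_sum_Icc hf).comp Nat.floor_mono).comp Real.exp_monotone)
    (fun v => Finset.sum_nonneg fun k _ => hf k) (hasLaplaceExtension_of_LSeries hf hK hG hGf)
  refine (real_limit.comp (Real.tendsto_log_atTop.comp tendsto_natCast_atTop_atTop)).congr' ?_
  filter_upwards [eventually_ge_atTop 1] with N hN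
  have N_pos : (0 : ℝ) < N := by exact_mod_cast hN
  simp [Real.exp_neg, Real.exp_log N_pos, div_eq_mul_inv]

end WienerIkehara

section PrimesInArithmeticProgressions

open ArithmeticFunction Topology

variable {q : ℕ}

lemma sum_residueClass_le (a : ZMod q) (N : ℕ) :
    ∑ k ∈ Finset.Icc 1 N, vonMangoldt.residueClass a k ≤ (Real.log 4 + 4) * N := by
  have chebyshev := Chebyshev.psi_le_const_mul_self (x := N) N.cast_nonneg
  rw [Chebyshev.psi, Nat.floor_natCast] at chebyshev
  exact (Finset.sum_le_sum fun k _ => vonMangoldt.residueClass_le a k).trans chebyshev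

theorem tendsto_sum_residueClass_div [NeZero q] {a : ZMod q} (ha : IsUnit a) :
    Tendsto (fun N : ℕ => (∑ k ∈ Finset.Icc 1 N, vonMangoldt.residueClass a k) / N) atTop
      (𝓝 (q.totient : ℝ)⁻¹) :=
  tendsto_sum_div_of_LSeries_sub_continuousOn (vonMangoldt.residueClass_nonneg a)
    (sum_residueClass_le a) (vonMangoldt.continuousOn_LFunctionResidueClassAux a)
    (by simpa using vonMangoldt.eqOn_LFunctionResidueClassAux ha)

end PrimesInArithmeticProgressions

section PrimeDensity

open ArithmeticFunction Topology

/-- The primes in `A` have natural density `δ` among all primes. The cut-off `p < x` is strict,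
which does not affect the limit. -/
def HasPrimeDensity (A : Set ℕ) (δ : ℝ) : Prop :=
  Tendsto (fun x : ℕ => (((Finset.range x).filter (fun p => p.Prime ∧ p ∈ A)).card : ℝ) /
    (((Finset.range x).filter Nat.Prime).card : ℝ)) atTop (𝓝 δ)

lemma tendsto_primeCounting_mul_log_sub_theta_div :
    Tendsto (fun N : ℕ => (N.primeCounting * Real.log N - Chebyshev.theta N) / N) atTop (𝓝 0) := by
  obtain ⟨C, hC⟩ := Chebyshev.primeCounting_sub_theta_div_log_isBigO.bound
  have log_tendsto : Tendsto (fun N : ℕ => Real.log N) atTop atTop :=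
    Real.tendsto_log_atTop.comp tendsto_natCast_atTop_atTop
  refine squeeze_zero_norm' ?_ (log_tendsto.const_div_atTop C)
  filter_upwards [tendsto_natCast_atTop_atTop.eventually hC, eventually_ge_atTop 2] with N hN hN2
  have N_pos : (0 : ℝ) < N := by positivity
  have log_pos : 0 < Real.log N := Real.log_pos (by exact_mod_cast hN2)
  rw [Nat.floor_natCast, Real.norm_of_nonneg (r := _ / _) (by positivity)] at hN
  have factor : (N.primeCounting * Real.log N - Chebyshev.theta N) / N =
      (N.primeCounting - Chebyshev.theta N / Real.log N) * (Real.log N / N) := by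
    field_simp
  rw [factor, norm_mul, Real.norm_of_nonneg (r := _ / _) (by positivity)]
  calc _ ≤ C * (N / Real.log N ^ 2) * (Real.log N / N) := by gcongr
    _ = C / Real.log N := by field_simp

lemma tendsto_psi_sub_theta_div :
    Tendsto (fun N : ℕ => (Chebyshev.psi N - Chebyshev.theta N) / N) atTop (𝓝 0) := by
  have sqrt_isLittleO : Real.sqrt =o[atTop] fun x : ℝ => x :=
    Asymptotics.isLittleO_of_tendsto (fun x hx => by simp [hx]) <|
      (tendsto_inv_atTop_zero.comp Real.tendsto_sqrt_atTop).congr fun x => by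
        simp [Real.sqrt_div_self]
  have psi_sub_theta_isLittleO := Chebyshev.isBigO_psi_sub_theta_sqrt.trans_isLittleO sqrt_isLittleO
  exact psi_sub_theta_isLittleO.tendsto_div_nhds_zero.comp tendsto_natCast_atTop_atTop

lemma primeCounting_mul_log_sub_theta (N : ℕ) :
    N.primeCounting * Real.log N - Chebyshev.theta N =
      ∑ p ∈ N.primesLE, (Real.log N - Real.log p) := by
  simp [Chebyshev.theta_eq_sum_primesLE_log, ← Nat.primesLE_card_eq_primeCounting]

lemma card_mul_log_sub_sum_indicator_vonMangoldt (A : Set ℕ) (N : ℕ) :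
    ((N.primesLE.filter (· ∈ A)).card : ℝ) * Real.log N -
        ∑ k ∈ Finset.Icc 1 N, A.indicator (fun n => Λ n) k =
      (∑ p ∈ N.primesLE, A.indicator (fun n => Real.log N - Real.log n) p) -
        ∑ k ∈ Finset.Icc 1 N with ¬ k.Prime, A.indicator (fun n => Λ n) k := by
  rw [← Finset.sum_filter_add_sum_filter_not (Finset.Icc 1 N) Nat.Prime,
    ← Nat.primesLE_eq_filter_Icc_one, ← sub_sub, sub_left_inj, ← nsmul_eq_mul,
    ← Finset.sum_const, Finset.sum_filter, ← Finset.sum_sub_distrib]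
  refine Finset.sum_congr rfl fun p hp => ?_
  by_cases hpA : p ∈ A <;>
    simp [hpA, vonMangoldt_apply_prime (Nat.prime_of_mem_primesLE hp)]

lemma abs_card_mul_log_sub_sum_indicator_vonMangoldt_le (A : Set ℕ) (N : ℕ) :
    |((N.primesLE.filter (· ∈ A)).card : ℝ) * Real.log N -
        ∑ k ∈ Finset.Icc 1 N, A.indicator (fun n => Λ n) k| ≤
      (N.primeCounting * Real.log N - Chebyshev.theta N) +
        (Chebyshev.psi N - Chebyshev.theta N) := by
  have log_sub_nonneg (p : ℕ) (hp : p ∈ N.primesLE) : 0 ≤ Real.log N - Real.log p :=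
    sub_nonneg.2 <| Real.log_le_log (by exact_mod_cast (Nat.prime_of_mem_primesLE hp).pos)
      (by exact_mod_cast Nat.le_of_mem_primesLE hp)
  have indicator_bounds {g : ℕ → ℝ} {k : ℕ} (hg : 0 ≤ g k) : |A.indicator g k| ≤ g k :=
    (norm_indicator_le_norm_self g k).trans_eq (abs_of_nonneg hg)
  rw [card_mul_log_sub_sum_indicator_vonMangoldt, primeCounting_mul_log_sub_theta,
    Chebyshev.psi_sub_theta_eq_sum_not_prime, Nat.floor_natCast]
  refine (abs_sub _ _).trans (add_le_add ?_ ?_)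
  · exact (Finset.abs_sum_le_sum_abs _ _).trans
      (Finset.sum_le_sum fun p hp => indicator_bounds (log_sub_nonneg p hp))
  · exact (Finset.abs_sum_le_sum_abs _ _).trans
      (Finset.sum_le_sum fun k _ => indicator_bounds vonMangoldt_nonneg)

lemma tendsto_card_primesLE_mul_log_div {A : Set ℕ} {c : ℝ}
    (h : Tendsto (fun N : ℕ => (∑ k ∈ Finset.Icc 1 N, A.indicator (fun n => Λ n) k) / N) atTop
      (𝓝 c)) :
    Tendsto (fun N : ℕ => ((N.primesLE.filter (· ∈ A)).card : ℝ) * Real.log N / N) atTop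
      (𝓝 c) := by
  have error_tendsto :=
    tendsto_primeCounting_mul_log_sub_theta_div.add tendsto_psi_sub_theta_div
  rw [add_zero] at error_tendsto
  have diff_tendsto : Tendsto (fun N : ℕ => (((N.primesLE.filter (· ∈ A)).card : ℝ) * Real.log N -
      ∑ k ∈ Finset.Icc 1 N, A.indicator (fun n => Λ n) k) / N) atTop (𝓝 0) := by
    refine squeeze_zero_norm (fun N => ?_) error_tendsto
    rw [← add_div, norm_div, RCLike.norm_natCast]
    gcongr
    exact abs_card_mul_log_sub_sum_indicator_vonMangoldt_le A N
  simpa [← add_div] using diff_tendsto.add h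

lemma hasPrimeDensity_of_tendsto_vonMangoldt {A : Set ℕ} {c : ℝ}
    (h : Tendsto (fun N : ℕ => (∑ k ∈ Finset.Icc 1 N, A.indicator (fun n => Λ n) k) / N) atTop
      (𝓝 c)) :
    HasPrimeDensity A c := by
  have prime_number_theorem :
      Tendsto (fun N : ℕ => (N.primesLE.card : ℝ) * Real.log N / N) atTop (𝓝 1) := by
    simpa using tendsto_card_primesLE_mul_log_div (A := Set.univ) (c := 1)
      (by simpa [vonMangoldt.residueClass, Subsingleton.elim _ (0 : ZMod 1)] using
        tendsto_sum_residueClass_div (q := 1) (a := 0) (isUnit_of_subsingleton _))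
  rw [HasPrimeDensity, ← tendsto_add_atTop_iff_nat 1, ← div_one c]
  refine ((tendsto_card_primesLE_mul_log_div h).div prime_number_theorem one_ne_zero).congr' ?_
  filter_upwards [eventually_ge_atTop 2] with N hN
  have N_pos : (0 : ℝ) < N := by positivity
  have log_pos : 0 < Real.log N := Real.log_pos (by exact_mod_cast hN)
  rw [Pi.div_apply, div_div_div_cancel_right₀ N_pos.ne', mul_div_mul_right _ _ log_pos.ne',
    Nat.primesLE_eq_filter_range, Finset.filter_filter]

theorem hasPrimeDensity_residueClasses {q : ℕ} [NeZero q] {H : Finset (ZMod q)}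
    (hH : ∀ a ∈ H, IsUnit a) :
    HasPrimeDensity {n | (n : ZMod q) ∈ H} (H.card / q.totient) := by
  refine hasPrimeDensity_of_tendsto_vonMangoldt ?_
  have sum_tendsto := tendsto_finsetSum H fun a ha => tendsto_sum_residueClass_div (hH a ha)
  rw [Finset.sum_const, nsmul_eq_mul, ← div_eq_mul_inv] at sum_tendsto
  refine sum_tendsto.congr fun N => ?_
  rw [← Finset.sum_div, Finset.sum_comm]
  simp [vonMangoldt.residueClass, Set.indicator_apply]

lemma HasPrimeDensity.union_finite {A B : Set ℕ} {δ : ℝ} (hA : HasPrimeDensity A δ)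
    (hB : B.Finite) : HasPrimeDensity (A ∪ B) δ := by
  have card_tendsto :
      Tendsto (fun x : ℕ => (((Finset.range x).filter Nat.Prime).card : ℝ)) atTop atTop :=
    tendsto_natCast_atTop_atTop.comp <| Nat.tendsto_primeCounting'.congr fun x => by
      rw [Nat.primeCounting', Nat.count_eq_card_filter_range]
  have upper_tendsto := hA.add (card_tendsto.const_div_atTop (hB.toFinset.card : ℝ))
  rw [add_zero] at upper_tendsto
  refine tendsto_of_tendsto_of_tendsto_of_le_of_le hA upper_tendsto (fun x => ?_) fun x => ?_
  · dsimp only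
    gcongr
    exact Set.subset_union_left
  · rw [← add_div]
    dsimp only
    gcongr
    rw [← Nat.cast_add, Nat.cast_le]
    refine (Finset.card_le_card fun p hp => ?_).trans (Finset.card_union_le _ _)
    simp only [Finset.mem_filter, Finset.mem_union, Set.mem_union, hB.mem_toFinset] at hp ⊢
    tauto

end PrimeDensity

section KroneckerSymbol

variable {D : ℤ}

lemma card_filter_isUnit_zmod (q : ℕ) [NeZero q] :
    (Finset.univ.filter fun a : ZMod q => IsUnit a).card = q.totient := by
  have units_image : Finset.univ.filter (fun a : ZMod q => IsUnit a) =
      Finset.univ.map ⟨((↑) : (ZMod q)ˣ → ZMod q), Units.val_injective⟩ := by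
    ext a
    simp only [Finset.mem_filter, Finset.mem_univ, true_and, Finset.mem_map,
      Function.Embedding.coeFn_mk]
    rfl
  rw [units_image, Finset.card_map, Finset.card_univ, ZMod.card_units_eq_totient]

lemma two_mul_card_filter_eq_one_of_odd {q : ℕ} [NeZero q] {κ : ZMod q → ℤ}
    (hκ : ∀ a, IsUnit a → κ a = 1 ∨ κ a = -1) (hodd : ∀ a, IsUnit a → κ (-a) = -κ a) :
    2 * (Finset.univ.filter fun a : ZMod q => IsUnit a ∧ κ a = 1).card = q.totient := by
  rw [← card_filter_isUnit_zmod,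
    ← Finset.card_filter_add_card_filter_not (s := Finset.univ.filter fun a : ZMod q => IsUnit a)
      (fun a => κ a = 1),
    Finset.filter_filter, Finset.filter_filter, two_mul, Nat.add_left_cancel_iff]
  refine Finset.card_nbij' (fun a => -a) (fun a => -a) ?_ ?_ (fun a _ => neg_neg a)
    (fun a _ => neg_neg a) <;> intro a ha
  · obtain ⟨a_unit, ha⟩ : IsUnit a ∧ κ a = 1 := by simpa using ha
    simp [a_unit, hodd a a_unit, ha]
  · obtain ⟨a_unit, ha⟩ : IsUnit a ∧ κ a ≠ 1 := by simpa using ha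
    simp [a_unit, hodd a a_unit, (hκ a a_unit).resolve_left ha]

/-- The Kronecker symbol `(D/·)` on the units modulo `|D|`, for a discriminant `D < 0`, written
with Jacobi symbols of odd denominator: `(D/4 | a)` if `4 ∣ D` and, by reciprocity, `(a | |D|)` if
`D ≡ 1 (mod 4)`. Its values at non-units are irrelevant. -/
def kroneckerSymbol (D : ℤ) (a : ZMod D.natAbs) : ℤ :=
  if D % 4 = 0 then jacobiSym (D / 4) a.val else jacobiSym a.val D.natAbs

lemma natAbs_eq_four_mul_natAbs_div (hD0 : D % 4 = 0) : D.natAbs = 4 * (D / 4).natAbs := by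
  omega

lemma odd_val_of_isUnit (hD0 : D % 4 = 0) {a : ZMod D.natAbs} (ha : IsUnit a) : Odd a.val :=
  Nat.coprime_two_right.1 <| (ZMod.val_coe_unit_coprime ha.unit).coprime_dvd_right (by omega)

lemma kroneckerSymbol_eq_one_or_neg_one {a : ZMod D.natAbs} (ha : IsUnit a) :
    kroneckerSymbol D a = 1 ∨ kroneckerSymbol D a = -1 := by
  have val_coprime : a.val.Coprime D.natAbs := ZMod.val_coe_unit_coprime ha.unit
  unfold kroneckerSymbol
  split_ifs with hD0
  · refine jacobiSym.eq_one_or_neg_one ?_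
    rw [Int.gcd_comm]
    exact val_coprime.coprime_dvd_right ⟨4, by rw [natAbs_eq_four_mul_natAbs_div hD0, mul_comm]⟩
  · exact jacobiSym.eq_one_or_neg_one val_coprime

lemma jacobiSym_div_four_natAbs_sub_one (hD : D < 0) (hD0 : D % 4 = 0) :
    jacobiSym (D / 4) (D.natAbs - 1) = -1 := by
  have odd_pred : Odd (D.natAbs - 1) := by rw [Nat.odd_iff]; omega
  have four_mul : jacobiSym (4 * -(D / 4)) (D.natAbs - 1) = 1 := by
    rw [show 4 * -(D / 4) = 1 + ((D.natAbs - 1 : ℕ) : ℤ) by omega,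
      jacobiSym.mod_left' (Int.add_emod_right _ _), jacobiSym.one_left]
  rw [jacobiSym.mul_left, jacobiSym.at_four odd_pred, one_mul] at four_mul
  rw [← neg_neg (D / 4), jacobiSym.neg _ odd_pred, four_mul,
    ZMod.χ₄_nat_three_mod_four (by omega), mul_one]

lemma jacobiSym_div_four_mod_natAbs (hD0 : D % 4 = 0) {b : ℕ} (hb : Odd b) :
    jacobiSym (D / 4) (b % D.natAbs) = jacobiSym (D / 4) b := by
  rw [natAbs_eq_four_mul_natAbs_div hD0, ← jacobiSym.mod_right _ hb]

lemma kroneckerSymbol_neg_of_four_dvd (hD : D < 0) (hD0 : D % 4 = 0) {a : ZMod D.natAbs}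
    (ha : IsUnit a) : kroneckerSymbol D (-a) = -kroneckerSymbol D a := by
  have a_odd := odd_val_of_isUnit hD0 ha
  have neg_val : (-a).val = a.val * (D.natAbs - 1) % D.natAbs := by
    have : NeZero D.natAbs := ⟨by omega⟩
    rw [← ZMod.val_natCast]
    congr 1
    push_cast [Nat.cast_sub (show 1 ≤ D.natAbs by omega)]
    simp
  have pred_odd : Odd (D.natAbs - 1) := by rw [Nat.odd_iff]; omega
  rw [kroneckerSymbol, kroneckerSymbol, if_pos hD0, if_pos hD0, neg_val,
    jacobiSym_div_four_mod_natAbs hD0 (a_odd.mul pred_odd),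
    jacobiSym.mul_right' _ a_odd.pos.ne' pred_odd.pos.ne',
    jacobiSym_div_four_natAbs_sub_one hD hD0, mul_neg_one]

lemma kroneckerSymbol_neg_of_mod_four_eq_one (hD : D < 0) (hD1 : D % 4 = 1)
    (a : ZMod D.natAbs) : kroneckerSymbol D (-a) = -kroneckerSymbol D a := by
  have : NeZero D.natAbs := ⟨by omega⟩
  have neg_val : ((-a).val : ℤ) % D.natAbs = -(a.val : ℤ) % D.natAbs := by
    rw [← Int.ModEq, ← ZMod.intCast_eq_intCast_iff]
    simp
  rw [kroneckerSymbol, kroneckerSymbol, if_neg (by omega), if_neg (by omega),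
    jacobiSym.mod_left' neg_val, jacobiSym.neg _ (by rw [Nat.odd_iff]; omega),
    ZMod.χ₄_nat_three_mod_four (by omega), neg_one_mul]

lemma isUnit_natCast_zmod_natAbs {p : ℕ} (hp : p.Prime) (hpD : ¬ (p : ℤ) ∣ D) :
    IsUnit (p : ZMod D.natAbs) :=
  (ZMod.isUnit_iff_coprime _ _).2 <|
    hp.coprime_iff_not_dvd.2 fun h => hpD (Int.natCast_dvd.2 h)

lemma jacobiSym_eq_one_of_isSquare_zmod_four_mul {p : ℕ} (hp : p.Prime) (hpD : ¬ (p : ℤ) ∣ D)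
    (hsq : IsSquare (D : ZMod (4 * p))) : jacobiSym D p = 1 := by
  have : Fact p.Prime := ⟨hp⟩
  have sq_mod_p : IsSquare (D : ZMod p) := by
    simpa using hsq.map (ZMod.castHom (dvd_mul_left p 4) (ZMod p))
  rw [← jacobiSym.legendreSym.to_jacobiSym]
  exact (legendreSym.eq_one_iff p (by rwa [Ne, ZMod.intCast_zmod_eq_zero_iff_dvd])).2 sq_mod_p

lemma emod_eight_eq_one_of_isSquare (hD1 : D % 4 = 1) (hsq : IsSquare (D : ZMod 8)) :
    D % 8 = 1 := by
  have odd_squares : ∀ r : ZMod 8, r * r = 5 → False := by decide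
  by_contra hD8
  obtain ⟨r, hr⟩ := hsq
  refine odd_squares r ?_
  rw [← hr]
  exact (ZMod.intCast_eq_intCast_iff' D 5 8).2 (by omega)

lemma kroneckerSymbol_natCast_of_four_dvd (hD0 : D % 4 = 0) {p : ℕ} (hp : Odd p) :
    kroneckerSymbol D p = jacobiSym D p := by
  rw [kroneckerSymbol, if_pos hD0, ZMod.val_natCast,
    jacobiSym_div_four_mod_natAbs hD0 hp, ← one_mul (jacobiSym _ _), ← jacobiSym.at_four hp,
    ← jacobiSym.mul_left, show 4 * (D / 4) = D by omega]

lemma kroneckerSymbol_natCast_of_mod_four_eq_one (hD1 : D % 4 = 1) (p : ℕ) :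
    kroneckerSymbol D p = jacobiSym p D.natAbs := by
  rw [kroneckerSymbol, if_neg (by omega), ZMod.val_natCast, Int.natCast_mod, ← jacobiSym.mod_left]

lemma jacobiSym_natAbs_of_mod_four_eq_one (hD : D < 0) (hD1 : D % 4 = 1) {p : ℕ} (hp : Odd p) :
    jacobiSym p D.natAbs = jacobiSym D p := by
  have abs_odd : Odd D.natAbs := by rw [Nat.odd_iff]; omega
  have reciprocity_sign : jacobiSym D p = ZMod.χ₄ p * jacobiSym D.natAbs p := by
    rw [← jacobiSym.neg _ hp, Int.natCast_natAbs, abs_of_neg hD, neg_neg]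
  rw [reciprocity_sign]
  rcases (show p % 4 = 1 ∨ p % 4 = 3 by have := Nat.odd_iff.1 hp; omega) with hp4 | hp4
  · rw [ZMod.χ₄_nat_one_mod_four hp4, one_mul,
      jacobiSym.quadratic_reciprocity_one_mod_four hp4 abs_odd]
  · rw [ZMod.χ₄_nat_three_mod_four hp4, neg_one_mul,
      jacobiSym.quadratic_reciprocity_three_mod_four hp4 (by omega)]

lemma kroneckerSymbol_eq_one_of_isSquare (hD : D < 0) (hD4 : D % 4 = 0 ∨ D % 4 = 1) {p : ℕ}
    (hp : p.Prime) (hpD : ¬ (p : ℤ) ∣ D) (hsq : IsSquare (D : ZMod (4 * p))) :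
    kroneckerSymbol D p = 1 := by
  have symbol_eq_one := jacobiSym_eq_one_of_isSquare_zmod_four_mul hp hpD hsq
  rcases hD4 with hD0 | hD1
  · have hp2 : p ≠ 2 := by
      rintro rfl
      exact hpD (by omega)
    rw [kroneckerSymbol_natCast_of_four_dvd hD0 (hp.odd_of_ne_two hp2), symbol_eq_one]
  · rw [kroneckerSymbol_natCast_of_mod_four_eq_one hD1]
    rcases hp.eq_two_or_odd' with rfl | hp_odd
    · have hD8 := emod_eight_eq_one_of_isSquare hD1 hsq
      have at_two := jacobiSym.at_two (b := D.natAbs) (by rw [Nat.odd_iff]; omega)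
      rw [Nat.cast_ofNat, at_two, ZMod.χ₈_nat_eq_if_mod_eight, if_neg (by omega),
        if_pos (by omega)]
    · rw [jacobiSym_natAbs_of_mod_four_eq_one hD hD1 hp_odd, symbol_eq_one]

end KroneckerSymbol

section SplitPrimes

variable {D : ℤ}

/-- The residue classes modulo `|D|` of the primes that split in the quadratic order of
discriminant `D`. -/
noncomputable def splitClasses (D : ℤ) [NeZero D.natAbs] : Finset (ZMod D.natAbs) :=
  Finset.univ.filter fun a => IsUnit a ∧ kroneckerSymbol D a = 1

/-- The set `𝒫_D`: the primes in the split residue classes and the primes dividing `D`. The latter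
cannot be omitted when they divide the conductor: `x² + 25y²` represents `5 ^ k` in a number of ways
that grows with `k`. -/
def splitPrimes (D : ℤ) [NeZero D.natAbs] : Set ℕ :=
  {p | p.Prime ∧ ((p : ZMod D.natAbs) ∈ splitClasses D ∨ (p : ℤ) ∣ D)}

lemma two_mul_card_splitClasses [NeZero D.natAbs] (hD : D < 0) (hD4 : D % 4 = 0 ∨ D % 4 = 1) :
    2 * (splitClasses D).card = D.natAbs.totient :=
  two_mul_card_filter_eq_one_of_odd (fun _ => kroneckerSymbol_eq_one_or_neg_one) fun a ha =>
    hD4.elim (fun hD0 => kroneckerSymbol_neg_of_four_dvd hD hD0 ha)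
      fun hD1 => kroneckerSymbol_neg_of_mod_four_eq_one hD hD1 a

lemma mem_splitPrimes_of_modEq [NeZero D.natAbs] {p q : ℕ} (hq : q.Prime)
    (hpD : p ∈ splitPrimes D) (hpq : p % D.natAbs = q % D.natAbs) : q ∈ splitPrimes D := by
  refine ⟨hq, hpD.2.imp (fun hp => ?_) fun hp => ?_⟩
  · rwa [← (ZMod.natCast_eq_natCast_iff' p q D.natAbs).2 hpq]
  · have p_dvd : p ∣ D.natAbs := Int.natCast_dvd.1 hp
    have p_dvd_q : p ∣ q := by rw [← Nat.dvd_mod_iff p_dvd, ← hpq, Nat.dvd_mod_iff p_dvd]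
    rwa [← (Nat.prime_dvd_prime_iff_eq hpD.1 hq).1 p_dvd_q]

lemma mem_splitPrimes_of_isSquare [NeZero D.natAbs] (hD : D < 0) (hD4 : D % 4 = 0 ∨ D % 4 = 1)
    {p : ℕ} (hp : p.Prime) (hsq : IsSquare (D : ZMod (4 * p))) : p ∈ splitPrimes D := by
  refine ⟨hp, or_iff_not_imp_right.2 fun hpD => ?_⟩
  simpa [splitClasses] using ⟨isUnit_natCast_zmod_natAbs hp hpD,
    kroneckerSymbol_eq_one_of_isSquare hD hD4 hp hpD hsq⟩

lemma splitPrimes_union_dvd (D : ℤ) [NeZero D.natAbs] :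
    splitPrimes D ∪ {p : ℕ | p.Prime ∧ (p : ℤ) ∣ D} = splitPrimes D :=
  Set.union_eq_left.2 fun _ hp => ⟨hp.1, Or.inr hp.2⟩

theorem hasPrimeDensity_splitPrimes [NeZero D.natAbs] (hD : D < 0)
    (hD4 : D % 4 = 0 ∨ D % 4 = 1) : HasPrimeDensity (splitPrimes D) (1 / 2) := by
  have density_eq : ((splitClasses D).card : ℝ) / D.natAbs.totient = 1 / 2 := by
    have totient_pos : 0 < D.natAbs.totient := Nat.totient_pos.2 (by omega)
    rw [← two_mul_card_splitClasses hD hD4] at totient_pos ⊢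
    have card_ne_zero : ((splitClasses D).card : ℝ) ≠ 0 := by exact_mod_cast (by omega)
    push_cast
    field_simp
  have finite_dvd : {p : ℕ | (p : ℤ) ∣ D}.Finite :=
    (Set.finite_Iic D.natAbs).subset fun p hp =>
      Nat.le_of_dvd (by omega) (Int.natCast_dvd.1 hp)
  have density := (hasPrimeDensity_residueClasses (H := splitClasses D) fun a ha =>
    (Finset.mem_filter.1 ha).2.1).union_finite finite_dvd
  rw [density_eq] at density
  refine density.congr fun x => ?_
  congr 4 with p
  simp [splitPrimes]

end SplitPrimes

section BinaryForm

variable {a b c p : ℤ} {u : ℤ × ℤ}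

/-- The binary quadratic form `ax² + bxy + cy²` as a function on `ℤ × ℤ`. -/
def binForm (a b c : ℤ) (u : ℤ × ℤ) : ℤ := a * u.1 ^ 2 + b * u.1 * u.2 + c * u.2 ^ 2

/-- The polar form of `binForm a b c`, normalised so that `binPolar a b c u u = 2 * binForm a b c u`
and hence integral. -/
def binPolar (a b c : ℤ) (u v : ℤ × ℤ) : ℤ :=
  2 * a * u.1 * v.1 + b * (u.1 * v.2 + v.1 * u.2) + 2 * c * u.2 * v.2

/-- The determinant of a pair of vectors of `ℤ × ℤ`; it vanishes modulo `p` when the two vectors lie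
on a common line modulo `p`. -/
def wedge (u v : ℤ × ℤ) : ℤ := u.1 * v.2 - v.1 * u.2

/-- The vector `u` does not vanish modulo `p`. -/
def IsPrimitiveAt (p : ℤ) (u : ℤ × ℤ) : Prop := ¬ (p ∣ u.1 ∧ p ∣ u.2)

lemma binForm_smul (k : ℤ) (u : ℤ × ℤ) : binForm a b c (k • u) = k ^ 2 * binForm a b c u := by
  simp only [binForm, Prod.smul_fst, Prod.smul_snd, smul_eq_mul]
  ring

lemma wedge_smul_smul (k : ℤ) (u v : ℤ × ℤ) : wedge (k • u) (k • v) = k ^ 2 * wedge u v := by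
  simp only [wedge, Prod.smul_fst, Prod.smul_snd, smul_eq_mul]
  ring

lemma binForm_swap (u : ℤ × ℤ) : binForm c b a u.swap = binForm a b c u := by
  simp only [binForm, Prod.fst_swap, Prod.snd_swap]
  ring

lemma wedge_swap_swap (u v : ℤ × ℤ) : wedge u.swap v.swap = -wedge u v := by
  simp only [wedge, Prod.fst_swap, Prod.snd_swap]
  ring

lemma discrim_swap : discrim c b a = discrim a b c := by
  simp only [discrim]
  ring

lemma IsPrimitiveAt.swap (hu : IsPrimitiveAt p u) : IsPrimitiveAt p u.swap :=
  fun h => hu h.symm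

lemma binPolar_sq (u v : ℤ × ℤ) : binPolar a b c u v ^ 2 =
    discrim a b c * wedge u v ^ 2 + 4 * binForm a b c u * binForm a b c v := by
  simp only [binPolar, discrim, wedge, binForm]
  ring

end BinaryForm

section LinesModPrimePowers

variable {a b c p : ℤ} {u v s : ℤ × ℤ} {d l : ℕ}

lemma dvd_fst_of_dvd_wedge (hp : Prime p) (hv : IsPrimitiveAt p v) (huv : p ∣ wedge u v)
    (hv1 : p ∣ v.1) : p ∣ u.1 := by
  have p_dvd_mul : p ∣ u.1 * v.2 := by
    simpa [wedge] using dvd_add huv (hv1.mul_right u.2)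
  exact (hp.dvd_or_dvd p_dvd_mul).resolve_right fun hv2 => hv ⟨hv1, hv2⟩

lemma dvd_wedge_of_dvd_wedge (hp : Prime p) (hs : IsPrimitiveAt p s) (hu : p ∣ wedge s u)
    (hv : p ∣ wedge s v) : p ∣ wedge u v := by
  have fst_mul : p ∣ s.1 * wedge u v := by
    rw [show s.1 * wedge u v = u.1 * wedge s v - v.1 * wedge s u by simp only [wedge]; ring]
    exact dvd_sub (hv.mul_left _) (hu.mul_left _)
  have snd_mul : p ∣ s.2 * wedge u v := by
    rw [show s.2 * wedge u v = u.2 * wedge s v - v.2 * wedge s u by simp only [wedge]; ring]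
    exact dvd_sub (hv.mul_left _) (hu.mul_left _)
  by_contra huv
  exact hs ⟨(hp.dvd_or_dvd fst_mul).resolve_right huv, (hp.dvd_or_dvd snd_mul).resolve_right huv⟩

lemma dvd_wedge_of_not_dvd_wedge (hp : Prime p) (hD : ¬ p ∣ discrim a b c)
    (hs : p ∣ binForm a b c s) (hu : p ∣ binForm a b c u) (hv : p ∣ binForm a b c v)
    (hsu : ¬ p ∣ wedge s u) (hsv : ¬ p ∣ wedge s v) : p ∣ wedge u v := by
  have p_dvd_polar : p ∣ binPolar a b c u v := by
    have : p ∣ wedge s u * (wedge s v * binPolar a b c u v) := by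
      rw [show wedge s u * (wedge s v * binPolar a b c u v) =
          wedge s v ^ 2 * binForm a b c u + wedge s u ^ 2 * binForm a b c v -
            wedge u v ^ 2 * binForm a b c s by simp only [wedge, binForm, binPolar]; ring]
      exact dvd_sub (dvd_add (hu.mul_left _) (hv.mul_left _)) (hs.mul_left _)
    exact (hp.dvd_or_dvd ((hp.dvd_or_dvd this).resolve_left hsu)).resolve_left hsv
  have p_dvd_discrim_mul : p ∣ discrim a b c * wedge u v ^ 2 := by
    rw [← (dvd_add_left (hv.mul_left _) : _ ↔ p ∣ discrim a b c * wedge u v ^ 2), ← binPolar_sq]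
    exact p_dvd_polar.pow two_ne_zero
  exact hp.dvd_of_dvd_pow ((hp.dvd_or_dvd p_dvd_discrim_mul).resolve_left hD)

lemma exists_isotropicLine_coloring (hp : Prime p) (hD : ¬ p ∣ discrim a b c) :
    ∃ line : ℤ × ℤ → Fin 2, ∀ u v, IsPrimitiveAt p u → p ∣ binForm a b c u →
      p ∣ binForm a b c v → line u = line v → p ∣ wedge u v := by
  by_cases isotropic : ∃ s, IsPrimitiveAt p s ∧ p ∣ binForm a b c s
  · obtain ⟨s, s_primitive, hs⟩ := isotropic
    refine ⟨fun u => if p ∣ wedge s u then 1 else 0, fun u v _ hu hv huv => ?_⟩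
    by_cases hsu : p ∣ wedge s u <;> by_cases hsv : p ∣ wedge s v
    · exact dvd_wedge_of_dvd_wedge hp s_primitive hsu hsv
    · simp [hsu, hsv] at huv
    · simp [hsu, hsv] at huv
    · exact dvd_wedge_of_not_dvd_wedge hp hD hs hu hv hsu hsv
  · exact ⟨fun _ => 0, fun u _ u_primitive hu => (isotropic ⟨u, u_primitive, hu⟩).elim⟩

lemma pow_dvd_pow_mul_of_dvd_mul {R : Type*} [CommRing R] [IsDomain R] {p t W : R} (hp : Prime p)
    (hW : ¬ p ^ (d + 1) ∣ W) (h : p ^ l ∣ t * W) : p ^ l ∣ p ^ d * t := by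
  induction d generalizing l W with
  | zero =>
    rw [zero_add, pow_one] at hW
    simpa using hp.pow_dvd_of_dvd_mul_right l hW h
  | succ d ih =>
    by_cases hpW : p ∣ W
    · obtain ⟨W', rfl⟩ := hpW
      cases l with
      | zero => simp
      | succ l =>
        rw [pow_succ', mul_left_comm, mul_dvd_mul_iff_left hp.ne_zero] at h
        rw [pow_succ', mul_dvd_mul_iff_left hp.ne_zero] at hW
        rw [pow_succ', pow_succ', mul_assoc]
        exact mul_dvd_mul_left p (ih hW h)
    · exact (hp.pow_dvd_of_dvd_mul_right l hpW h).mul_left _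

lemma not_pow_dvd_secant (hp : Prime p) (hD : ¬ p ^ (d + 1) ∣ discrim a b c) (hu1 : ¬ p ∣ u.1)
    (hv1 : ¬ p ∣ v.1) (hu : p ^ (d + 1) ∣ binForm a b c u) (huv : p ^ (d + 1) ∣ wedge u v) :
    ¬ p ^ (d + 1) ∣ b * u.1 * v.1 + c * (v.1 * u.2 + u.1 * v.2) := by
  intro secant_dvd
  have slope_dvd : p ^ (d + 1) ∣ b * u.1 + 2 * c * u.2 := by
    refine hp.pow_dvd_of_dvd_mul_right _ hv1 ?_
    rw [show (b * u.1 + 2 * c * u.2) * v.1 =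
      b * u.1 * v.1 + c * (v.1 * u.2 + u.1 * v.2) - c * wedge u v by simp only [wedge]; ring]
    exact dvd_sub secant_dvd (huv.mul_left c)
  refine hD (hp.pow_dvd_of_dvd_mul_right _ (fun h => hu1 (hp.dvd_of_dvd_pow h) : ¬ p ∣ u.1 ^ 2) ?_)
  rw [show discrim a b c * u.1 ^ 2 =
    (b * u.1 + 2 * c * u.2) * (b * u.1 + 2 * c * u.2) - 4 * c * binForm a b c u by
      simp only [discrim, binForm]; ring]
  exact dvd_sub (slope_dvd.mul_left _) (hu.mul_left _)

lemma pow_dvd_pow_mul_wedge_of_not_dvd_fst (hp : Prime p) (hD : ¬ p ^ (d + 1) ∣ discrim a b c)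
    (hu1 : ¬ p ∣ u.1) (v_primitive : IsPrimitiveAt p v) (hu : p ^ l ∣ binForm a b c u)
    (hv : p ^ l ∣ binForm a b c v) (huv : p ^ (d + 1) ∣ wedge u v) :
    p ^ l ∣ p ^ d * wedge u v := by
  rcases le_or_gt l d with hl | hl
  · exact (pow_dvd_pow p hl).mul_right _
  have hv1 : ¬ p ∣ v.1 := fun hv1 =>
    hu1 (dvd_fst_of_dvd_wedge hp v_primitive ((dvd_pow_self p d.succ_ne_zero).trans huv) hv1)
  refine pow_dvd_pow_mul_of_dvd_mul hp
    (not_pow_dvd_secant hp hD hu1 hv1 ((pow_dvd_pow p hl).trans hu) huv) ?_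
  rw [show wedge u v * (b * u.1 * v.1 + c * (v.1 * u.2 + u.1 * v.2)) =
    u.1 ^ 2 * binForm a b c v - v.1 ^ 2 * binForm a b c u by simp only [wedge, binForm]; ring]
  exact dvd_sub (hv.mul_left _) (hu.mul_left _)

/-- Hensel's lemma: isotropic lines modulo `p ^ l` that agree modulo `p ^ (d + 1)` agree
modulo `p ^ (l - d)`. -/
lemma pow_dvd_pow_mul_wedge (hp : Prime p) (hD : ¬ p ^ (d + 1) ∣ discrim a b c)
    (u_primitive : IsPrimitiveAt p u) (v_primitive : IsPrimitiveAt p v)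
    (hu : p ^ l ∣ binForm a b c u) (hv : p ^ l ∣ binForm a b c v)
    (huv : p ^ (d + 1) ∣ wedge u v) : p ^ l ∣ p ^ d * wedge u v := by
  by_cases hu1 : p ∣ u.1
  · have hu2 : ¬ p ∣ u.2 := fun hu2 => u_primitive ⟨hu1, hu2⟩
    have swapped := pow_dvd_pow_mul_wedge_of_not_dvd_fst (a := c) (b := b) (c := a) (u := u.swap)
      (v := v.swap) (l := l) hp (by rwa [discrim_swap]) hu2 v_primitive.swap
      (by rwa [binForm_swap]) (by rwa [binForm_swap]) (by rwa [wedge_swap_swap, dvd_neg])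
    rwa [wedge_swap_swap, mul_neg, dvd_neg] at swapped
  · exact pow_dvd_pow_mul_wedge_of_not_dvd_fst hp hD hu1 v_primitive hu hv huv

lemma isSquare_discrim_of_not_dvd_fst {p : ℕ} (hp : p.Prime) (hu1 : ¬ (p : ℤ) ∣ u.1)
    (hu : (p : ℤ) ∣ binForm a b c u) : IsSquare ((discrim a b c : ℤ) : ZMod (4 * p)) := by
  have hp' := Nat.prime_iff_prime_int.1 hp
  obtain ⟨x, y, bezout⟩ := hp'.coprime_iff_not_dvd.2 hu1
  set t := y * u.2
  have p_dvd_at_slope : (p : ℤ) ∣ a + b * t + c * t ^ 2 := by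
    have slope : u.1 * t = u.2 - p * (x * u.2) := by linear_combination u.2 * bezout
    have : (p : ℤ) ∣ (a + b * t + c * t ^ 2) * u.1 ^ 2 := by
      rw [show (a + b * t + c * t ^ 2) * u.1 ^ 2 = binForm a b c u -
          p * (x * u.2 * (b * u.1 + c * (2 * u.2 - p * (x * u.2)))) by
        rw [binForm]
        linear_combination (b * u.1 + c * (u.1 * t + u.2 - p * (x * u.2))) * slope]
      exact dvd_sub hu (dvd_mul_right _ _)
    exact (hp'.dvd_or_dvd this).resolve_right fun h => hu1 (hp'.dvd_of_dvd_pow h)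
  refine ⟨((b + 2 * c * t : ℤ) : ZMod (4 * p)), ?_⟩
  rw [← Int.cast_mul, ZMod.intCast_eq_intCast_iff_dvd_sub]
  push_cast
  rw [show (b + 2 * c * t) * (b + 2 * c * t) - discrim a b c =
    4 * ((a + b * t + c * t ^ 2) * c) by simp only [discrim]; ring]
  exact mul_dvd_mul_left 4 (p_dvd_at_slope.mul_right c)

lemma isSquare_discrim_of_dvd_binForm {p : ℕ} (hp : p.Prime) (u_primitive : IsPrimitiveAt p u)
    (hu : (p : ℤ) ∣ binForm a b c u) : IsSquare ((discrim a b c : ℤ) : ZMod (4 * p)) := by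
  by_cases hu1 : (p : ℤ) ∣ u.1
  · rw [← discrim_swap]
    exact isSquare_discrim_of_not_dvd_fst (u := u.swap) hp (fun hu2 => u_primitive ⟨hu1, hu2⟩)
      (by rwa [binForm_swap])
  · exact isSquare_discrim_of_not_dvd_fst hp hu1 hu

end LinesModPrimePowers

section PrimitivePart

variable {a b c : ℤ} {u : ℤ × ℤ}

/-- The set of representations of `n` by the form `ax² + bxy + cy²`. -/
def representations (a b c n : ℤ) : Set (ℤ × ℤ) := {u | binForm a b c u = n}

lemma exists_eq_pow_smul_isPrimitiveAt {p : ℤ} (hp : Prime p) (hu : u ≠ 0) :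
    ∃ (j : ℕ) (w : ℤ × ℤ), u = p ^ j • w ∧ IsPrimitiveAt p w := by
  have gcd_ne_zero : (Int.gcd u.1 u.2 : ℤ) ≠ 0 := by
    simpa [Prod.ext_iff] using hu
  have finite : FiniteMultiplicity p (Int.gcd u.1 u.2 : ℤ) :=
    FiniteMultiplicity.of_prime_left hp gcd_ne_zero
  obtain ⟨j, pow_dvd, not_pow_succ_dvd⟩ : ∃ j : ℕ, p ^ j ∣ (Int.gcd u.1 u.2 : ℤ) ∧
      ¬ p ^ (j + 1) ∣ (Int.gcd u.1 u.2 : ℤ) :=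
    ⟨_, pow_multiplicity_dvd _ _, finite.not_pow_dvd_of_multiplicity_lt (Nat.lt_succ_self _)⟩
  obtain ⟨x, hx⟩ := pow_dvd.trans (Int.gcd_dvd_left u.1 u.2)
  obtain ⟨y, hy⟩ := pow_dvd.trans (Int.gcd_dvd_right u.1 u.2)
  refine ⟨j, (x, y), Prod.ext hx hy, fun ⟨hpx, hpy⟩ => not_pow_succ_dvd ?_⟩
  refine Int.dvd_coe_gcd ?_ ?_
  · rw [hx, pow_succ]
    exact mul_dvd_mul_left _ hpx
  · rw [hy, pow_succ]
    exact mul_dvd_mul_left _ hpy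

lemma pow_sub_dvd_binForm {p n : ℕ} (hp : p.Prime) (hn : n ≠ 0) {j : ℕ}
    (hu : binForm a b c ((p : ℤ) ^ j • u) = n) :
    2 * j ≤ n.factorization p ∧ (p : ℤ) ^ (n.factorization p - 2 * j) ∣ binForm a b c u := by
  rw [binForm_smul, ← pow_mul, mul_comm j] at hu
  have two_mul_le : 2 * j ≤ n.factorization p := by
    rw [← hp.pow_dvd_iff_le_factorization hn, ← Int.natCast_dvd_natCast, ← hu]
    push_cast
    exact dvd_mul_right _ _
  refine ⟨two_mul_le, ?_⟩
  have pow_dvd : (p : ℤ) ^ n.factorization p ∣ n := by exact_mod_cast Nat.ordProj_dvd n p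
  rw [← hu, ← Nat.add_sub_cancel' two_mul_le, pow_add] at pow_dvd
  exact Int.dvd_of_mul_dvd_mul_left (pow_ne_zero _ (mod_cast hp.ne_zero)) pow_dvd

lemma exists_primitivePart {p n : ℕ} (hp : p.Prime) (hn : n ≠ 0)
    (hu : u ∈ representations a b c n) :
    ∃ (j : ℕ) (w : ℤ × ℤ), u = (p : ℤ) ^ j • w ∧ IsPrimitiveAt p w ∧
      2 * j ≤ n.factorization p ∧ (p : ℤ) ^ (n.factorization p - 2 * j) ∣ binForm a b c w := by
  have hu0 : u ≠ 0 := by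
    rintro rfl
    exact hn (by simpa [representations, binForm, eq_comm] using hu)
  obtain ⟨j, w, rfl, w_primitive⟩ :=
    exists_eq_pow_smul_isPrimitiveAt (Nat.prime_iff_prime_int.1 hp) hu0
  exact ⟨j, w, rfl, w_primitive, pow_sub_dvd_binForm hp hn hu⟩

lemma exists_eq_smul_of_not_isSquare {p n : ℕ} (hp : p.Prime) (hn : n ≠ 0)
    (hD : ¬ IsSquare ((discrim a b c : ℤ) : ZMod (4 * p))) (hu : u ∈ representations a b c n) :
    ∃ (j : ℕ) (w : ℤ × ℤ), n.factorization p = 2 * j ∧ u = (p : ℤ) ^ j • w := by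
  obtain ⟨j, w, hw, w_primitive, two_mul_le, pow_dvd⟩ := exists_primitivePart hp hn hu
  refine ⟨j, w, le_antisymm ?_ two_mul_le, hw⟩
  by_contra! lt
  exact hD (isSquare_discrim_of_dvd_binForm hp w_primitive
    ((dvd_pow_self _ (Nat.sub_ne_zero_of_lt lt)).trans pow_dvd))

end PrimitivePart

/-- The vectors of `A` can be coloured with `N` colours so that `q` divides `M * wedge u v` for any
two vectors of the same colour; for `M = 1` this says that vectors of the same colour lie on a
common line modulo `q`. -/
def WedgeColorable (A : Set (ℤ × ℤ)) (M q : ℤ) (N : ℕ) : Prop :=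
  ∃ color : A → Fin N, ∀ u v : A, color u = color v → q ∣ M * wedge u v

namespace WedgeColorable

variable {A : Set (ℤ × ℤ)} {M q : ℤ} {N : ℕ}

lemma of_coloring {ι : Type*} [Fintype ι] (color : A → ι)
    (h : ∀ u v, color u = color v → q ∣ M * wedge u v) :
    WedgeColorable A M q (Fintype.card ι) :=
  ⟨fun u => Fintype.equivFin ι (color u), fun u v huv => h u v (by simpa using huv)⟩

lemma mono {M' : ℤ} {N' : ℕ} (h : WedgeColorable A M q N) (hM : M ∣ M') (hN : N ≤ N') :
    WedgeColorable A M' q N' := by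
  obtain ⟨color, hcolor⟩ := h
  exact ⟨fun u => (color u).castLE hN, fun u v huv =>
    (hcolor u v (Fin.castLE_injective hN huv)).trans (mul_dvd_mul_right hM _)⟩

lemma prod {ι : Type*} {s : Finset ι} {q : ι → ℤ} {N : ι → ℕ}
    (hq : (s : Set ι).Pairwise (Function.onFun IsCoprime q))
    (h : ∀ i ∈ s, WedgeColorable A M (q i) (N i)) :
    WedgeColorable A M (∏ i ∈ s, q i) (∏ i ∈ s, N i) := by
  choose color hcolor using fun i : s => h i i.2
  have joint := of_coloring (M := M) (q := ∏ i ∈ s, q i) (fun u i => color i u) fun u v huv =>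
    Finset.prod_dvd_of_coprime hq fun i hi => hcolor ⟨i, hi⟩ u v (congrFun huv ⟨i, hi⟩)
  rwa [Fintype.card_pi, Finset.univ_eq_attach, Finset.prod_congr rfl fun i _ => Fintype.card_fin _,
    Finset.prod_attach s N] at joint

end WedgeColorable

section LocalColorings

variable {a b c : ℤ} {p n : ℕ}

lemma pow_dvd_mul_wedge_smul {p M : ℤ} {j k : ℕ} {u v : ℤ × ℤ} (hjk : 2 * j ≤ k)
    (h : p ^ (k - 2 * j) ∣ M * wedge u v) : p ^ k ∣ M * wedge (p ^ j • u) (p ^ j • v) := by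
  rw [wedge_smul_smul, mul_left_comm, ← pow_mul, mul_comm j, ← Nat.add_sub_cancel' hjk, pow_add]
  exact mul_dvd_mul_left _ h

lemma pow_dvd_pow_mul_wedge_smul {p : ℤ} {d j k : ℕ} {u v : ℤ × ℤ} (hp : Prime p)
    (hD : ¬ p ^ (d + 1) ∣ discrim a b c) (hjk : 2 * j ≤ k) (u_primitive : IsPrimitiveAt p u)
    (v_primitive : IsPrimitiveAt p v) (hu : p ^ (k - 2 * j) ∣ binForm a b c u)
    (hv : p ^ (k - 2 * j) ∣ binForm a b c v) (huv : 2 * j < k → p ^ (d + 1) ∣ wedge u v) :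
    p ^ k ∣ p ^ d * wedge (p ^ j • u) (p ^ j • v) := by
  refine pow_dvd_mul_wedge_smul hjk ?_
  rcases hjk.eq_or_lt with rfl | hlt
  · simp
  · exact pow_dvd_pow_mul_wedge hp hD u_primitive v_primitive hu hv (huv hlt)

lemma wedgeColorable_of_not_isSquare (hp : p.Prime) (hn : n ≠ 0)
    (hD : ¬ IsSquare ((discrim a b c : ℤ) : ZMod (4 * p))) :
    WedgeColorable (representations a b c n) 1 ((p : ℤ) ^ n.factorization p) 1 := by
  refine ⟨fun _ => 0, fun ⟨u, hu⟩ ⟨v, hv⟩ _ => ?_⟩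
  obtain ⟨i, w, hi, rfl⟩ := exists_eq_smul_of_not_isSquare hp hn hD hu
  obtain ⟨j, w', hj, rfl⟩ := exists_eq_smul_of_not_isSquare hp hn hD hv
  obtain rfl : i = j := by omega
  exact pow_dvd_mul_wedge_smul hi.ge (by simp [hi])

lemma wedgeColorable_of_not_dvd_discrim (hp : p.Prime) (hn : n ≠ 0)
    (hD : ¬ (p : ℤ) ∣ discrim a b c) :
    WedgeColorable (representations a b c n) 1 ((p : ℤ) ^ n.factorization p)
      (n.factorization p + 1) := by
  have hp' := Nat.prime_iff_prime_int.1 hp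
  obtain ⟨line, hline⟩ := exists_isotropicLine_coloring hp' hD
  choose j w hu w_primitive hj hw using fun u : representations a b c n =>
    exists_primitivePart hp hn u.2
  set k := n.factorization p
  have line_lt := fun u => (line (w u)).isLt
  -- The primitive part `w u` of `u = p ^ j • w u` carries no information if `2 * j = k`, and is
  -- determined up to Hensel lifting by its isotropic line modulo `p` if `2 * j < k`.
  let color : representations a b c n → ℕ := fun u =>
    2 * j u + if 2 * j u = k then 0 else (line (w u) : ℕ)
  have color_lt : ∀ u, color u < k + 1 := fun u => by
    have := hj u
    have := line_lt u
    simp only [color]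
    split_ifs <;> omega
  refine ⟨fun u => ⟨color u, color_lt u⟩, fun u v huv => ?_⟩
  have same_color : color u = color v := congrArg Fin.val huv
  obtain ⟨same_j, same_line⟩ : j u = j v ∧ (2 * j u < k → line (w u) = line (w v)) := by
    have := hj u
    have := line_lt u
    have := line_lt v
    rw [Fin.ext_iff]
    simp only [color] at same_color
    split_ifs at same_color <;> omega
  have hwv := hw v
  rw [← same_j] at hwv
  rw [hu u, hu v, ← same_j, ← pow_zero (p : ℤ)]
  refine pow_dvd_pow_mul_wedge_smul hp' (by simpa using hD) (hj u) (w_primitive u)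
    (w_primitive v) (hw u) hwv fun hlt => ?_
  have p_dvd_pow : (p : ℤ) ∣ p ^ (k - 2 * j u) := dvd_pow_self _ (Nat.sub_ne_zero_of_lt hlt)
  simpa using hline _ _ (w_primitive u) (p_dvd_pow.trans (hw u)) (p_dvd_pow.trans hwv)
    (same_line hlt)

lemma dvd_wedge_of_intCast_eq {q : ℕ} {u v : ℤ × ℤ} (h1 : (u.1 : ZMod q) = v.1)
    (h2 : (u.2 : ZMod q) = v.2) : (q : ℤ) ∣ wedge u v := by
  rw [← ZMod.intCast_zmod_eq_zero_iff_dvd, wedge]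
  push_cast
  rw [h1, h2, sub_self]

lemma wedgeColorable_of_not_pow_dvd_discrim {d : ℕ} (hp : p.Prime) (hn : n ≠ 0)
    (hD : ¬ (p : ℤ) ^ (d + 1) ∣ discrim a b c) :
    WedgeColorable (representations a b c n) ((p : ℤ) ^ d) ((p : ℤ) ^ n.factorization p)
      ((n.factorization p + 1) * (p ^ (d + 1)) ^ 2) := by
  choose j w hu w_primitive hj hw using fun u : representations a b c n =>
    exists_primitivePart hp hn u.2
  set q := p ^ (d + 1)
  have : NeZero q := ⟨pow_ne_zero _ hp.ne_zero⟩
  have colorable := WedgeColorable.of_coloring (A := representations a b c n) (M := (p : ℤ) ^ d)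
    (q := (p : ℤ) ^ n.factorization p)
    (fun u => ((⟨j u, by have := hj u; omega⟩ : Fin (n.factorization p + 1)),
      ((w u).1 : ZMod q), ((w u).2 : ZMod q))) fun u v huv => by
    simp only [Prod.mk.injEq, Fin.mk.injEq] at huv
    obtain ⟨same_j, same_fst, same_snd⟩ := huv
    have hwv := hw v
    rw [← same_j] at hwv
    rw [hu u, hu v, ← same_j]
    exact pow_dvd_pow_mul_wedge_smul (Nat.prime_iff_prime_int.1 hp) hD (hj u) (w_primitive u)
      (w_primitive v) (hw u) hwv fun _ => mod_cast dvd_wedge_of_intCast_eq same_fst same_snd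
  rwa [Fintype.card_prod, Fintype.card_prod, Fintype.card_fin, ZMod.card, ← sq] at colorable

/-- The factor by which the number of colours at a prime dividing `D` exceeds the count `v_p(n) + 1`
of a split prime: the number of pairs of residues modulo `p ^ (v_p(D) + 1)`. -/
def ramifiedColors (D : ℤ) (p : ℕ) : ℕ :=
  if (p : ℤ) ∣ D then (p ^ (D.natAbs.factorization p + 1)) ^ 2 else 1

lemma one_le_ramifiedColors (D : ℤ) (hp : p.Prime) : 1 ≤ ramifiedColors D p := by
  have := hp.pos
  unfold ramifiedColors
  split_ifs
  · exact Nat.one_le_iff_ne_zero.2 (by positivity)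
  · exact le_rfl

lemma wedgeColorable_of_prime {P : Set ℕ} (hD : discrim a b c ≠ 0)
    (hP : ∀ p : ℕ, p.Prime → IsSquare ((discrim a b c : ℤ) : ZMod (4 * p)) → p ∈ P)
    (hp : p.Prime) (hn : n ≠ 0) :
    WedgeColorable (representations a b c n) (discrim a b c) ((p : ℤ) ^ n.factorization p)
      ((if p ∈ P then n.factorization p + 1 else 1) * ramifiedColors (discrim a b c) p) := by
  by_cases hpP : p ∈ P
  · rw [if_pos hpP]
    by_cases hpD : (p : ℤ) ∣ discrim a b c
    · rw [ramifiedColors, if_pos hpD]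
      refine (wedgeColorable_of_not_pow_dvd_discrim hp hn fun h => ?_).mono ?_ le_rfl
      · rw [← Nat.cast_pow, Int.natCast_dvd] at h
        exact Nat.pow_succ_factorization_not_dvd (Int.natAbs_ne_zero.2 hD) hp h
      · rw [← Nat.cast_pow, Int.natCast_dvd]
        exact Nat.ordProj_dvd _ p
    · rw [ramifiedColors, if_neg hpD, mul_one]
      exact (wedgeColorable_of_not_dvd_discrim hp hn hpD).mono (one_dvd _) le_rfl
  · rw [if_neg hpP, one_mul]
    exact (wedgeColorable_of_not_isSquare hp hn fun h => hpP (hP p hp h)).mono (one_dvd _)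
      (one_le_ramifiedColors _ hp)

lemma wedgeColorable_representations {P : Set ℕ} (hD : discrim a b c ≠ 0)
    (hP : ∀ p : ℕ, p.Prime → IsSquare ((discrim a b c : ℤ) : ZMod (4 * p)) → p ∈ P)
    (hn : n ≠ 0) :
    WedgeColorable (representations a b c n) (discrim a b c) n
      (∏ p ∈ n.primeFactors,
        (if p ∈ P then n.factorization p + 1 else 1) * ramifiedColors (discrim a b c) p) := by
  have coprime : (n.primeFactors : Set ℕ).Pairwise
      (Function.onFun IsCoprime fun p => (p : ℤ) ^ n.factorization p) := fun p hp q hq hpq =>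
    IsCoprime.pow (Nat.isCoprime_iff_coprime.2 <| (Nat.coprime_primes
      (Nat.prime_of_mem_primeFactors hp) (Nat.prime_of_mem_primeFactors hq)).2 hpq)
  have colorable := WedgeColorable.prod coprime fun p hp =>
    wedgeColorable_of_prime hD hP (Nat.prime_of_mem_primeFactors hp) hn
  rwa [show ∏ p ∈ n.primeFactors, (p : ℤ) ^ n.factorization p = n by
    exact_mod_cast Nat.prod_factorization_pow_eq_self hn] at colorable

end LocalColorings

section CountingRepresentations

variable {a b c n : ℤ} {u v w : ℤ × ℤ}

lemma eq_of_binPolar_eq_of_wedge_eq (hu : binForm a b c u ≠ 0)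
    (hpolar : binPolar a b c u v = binPolar a b c u w) (hwedge : wedge u v = wedge u w) :
    v = w := by
  have recover_fst (v : ℤ × ℤ) : 2 * binForm a b c u * v.1 =
      u.1 * binPolar a b c u v - (b * u.1 + 2 * c * u.2) * wedge u v := by
    simp only [binForm, binPolar, wedge]
    ring
  have recover_snd (v : ℤ × ℤ) : 2 * binForm a b c u * v.2 =
      u.2 * binPolar a b c u v + (2 * a * u.1 + b * u.2) * wedge u v := by
    simp only [binForm, binPolar, wedge]
    ring
  refine Prod.ext (mul_left_cancel₀ (mul_ne_zero two_ne_zero hu) ?_)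
    (mul_left_cancel₀ (mul_ne_zero two_ne_zero hu) ?_)
  · rw [recover_fst, recover_fst, hpolar, hwedge]
  · rw [recover_snd, recover_snd, hpolar, hwedge]

lemma discrim_mul_binPolar_sq (hu : u ∈ representations a b c n)
    (hv : v ∈ representations a b c n) :
    (discrim a b c * binPolar a b c u v) ^ 2 = 4 * discrim a b c ^ 2 * n ^ 2 +
      discrim a b c * (discrim a b c * wedge u v) ^ 2 := by
  rw [mul_pow, binPolar_sq, hu, hv]
  ring

lemma dvd_discrim_mul_binPolar (hu : u ∈ representations a b c n)
    (hv : v ∈ representations a b c n) (huv : n ∣ discrim a b c * wedge u v) :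
    n ∣ discrim a b c * binPolar a b c u v := by
  rw [← Int.pow_dvd_pow_iff two_ne_zero, discrim_mul_binPolar_sq hu hv]
  exact dvd_add (dvd_mul_left _ _) ((pow_dvd_pow_of_dvd huv 2).mul_left _)

lemma mem_Icc_of_sq_sub_mul_sq_eq {D β γ : ℤ} (hD : D < 0) (h : β ^ 2 - D * γ ^ 2 = 4 * D ^ 2) :
    β ∈ Finset.Icc (2 * D) (-(2 * D)) ∧ γ ∈ Finset.Icc (2 * D) (-(2 * D)) := by
  have β_sq_le : β ^ 2 ≤ (-(2 * D)) ^ 2 := by nlinarith [sq_nonneg γ]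
  have γ_sq_le : γ ^ 2 ≤ (-(2 * D)) ^ 2 := by nlinarith [sq_nonneg γ, sq_nonneg β]
  have hβ := abs_le_of_sq_le_sq' β_sq_le (by omega)
  have hγ := abs_le_of_sq_le_sq' γ_sq_le (by omega)
  rw [neg_neg] at hβ hγ
  exact ⟨Finset.mem_Icc.2 hβ, Finset.mem_Icc.2 hγ⟩

/-- `v` is determined by the pair `(D * binPolar u v / n, D * wedge u v / n)`, an integral point
on the ellipse `β² - Dγ² = 4D²`. -/
lemma card_le_of_dvd_discrim_mul_wedge (hD : discrim a b c < 0) (hn : n ≠ 0)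
    {S : Finset (ℤ × ℤ)} (hS : ∀ v ∈ S, v ∈ representations a b c n)
    (hwedge : ∀ u ∈ S, ∀ v ∈ S, n ∣ discrim a b c * wedge u v) :
    S.card ≤ (4 * (discrim a b c).natAbs + 1) ^ 2 := by
  rcases S.eq_empty_or_nonempty with rfl | ⟨u, hu⟩
  · simp
  have hpolar : ∀ v ∈ S, n ∣ discrim a b c * binPolar a b c u v := fun v hv =>
    dvd_discrim_mul_binPolar (hS u hu) (hS v hv) (hwedge u hu v hv)
  set box := Finset.Icc (2 * discrim a b c) (-(2 * discrim a b c))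
  have box_card : box.card = 4 * (discrim a b c).natAbs + 1 := by
    rw [Int.card_Icc]
    omega
  rw [← box_card, sq, ← Finset.card_product]
  refine Finset.card_le_card_of_injOn (fun v =>
    (discrim a b c * binPolar a b c u v / n, discrim a b c * wedge u v / n)) ?_ ?_
  · intro v hv
    obtain ⟨β, hβ⟩ := hpolar v hv
    obtain ⟨γ, hγ⟩ := hwedge u hu v hv
    have ellipse : n ^ 2 * (β ^ 2 - discrim a b c * γ ^ 2) = n ^ 2 * (4 * discrim a b c ^ 2) := by
      have := discrim_mul_binPolar_sq (hS u hu) (hS v hv)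
      rw [hβ, hγ] at this
      linear_combination this
    simp only [Finset.coe_product, Set.mem_prod, Finset.mem_coe, hβ, hγ,
      Int.mul_ediv_cancel_left _ hn]
    exact mem_Icc_of_sq_sub_mul_sq_eq hD (mul_left_cancel₀ (pow_ne_zero 2 hn) ellipse)
  · intro v hv w hw hvw
    obtain ⟨same_polar, same_wedge⟩ := Prod.mk.inj hvw
    refine eq_of_binPolar_eq_of_wedge_eq (by rwa [hS u hu] : binForm a b c u ≠ 0)
      (mul_left_cancel₀ hD.ne ?_) (mul_left_cancel₀ hD.ne ?_)
    · exact (Int.ediv_left_inj (hpolar v hv) (hpolar w hw)).1 same_polar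
    · exact (Int.ediv_left_inj (hwedge u hu v hv) (hwedge u hu w hw)).1 same_wedge

lemma card_le_of_wedgeColorable {N : ℕ} (hD : discrim a b c < 0) (hn : n ≠ 0)
    (h : WedgeColorable (representations a b c n) (discrim a b c) n N)
    {S : Finset (ℤ × ℤ)} (hS : ∀ v ∈ S, v ∈ representations a b c n) :
    S.card ≤ (4 * (discrim a b c).natAbs + 1) ^ 2 * N := by
  obtain ⟨color, hcolor⟩ := h
  rw [← S.card_attach, ← Fintype.card_fin N, ← Finset.card_univ (α := Fin N)]
  refine Finset.card_le_mul_card_image_of_maps_to (f := fun u : S => color ⟨u, hS u u.2⟩)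
    (fun _ _ => Finset.mem_univ _) _ fun i _ => ?_
  rw [← Finset.card_map (Function.Embedding.subtype _)]
  refine card_le_of_dvd_discrim_mul_wedge hD hn ?_ ?_
  · simp only [Finset.mem_map]
    rintro _ ⟨v, -, rfl⟩
    exact hS v v.2
  · simp only [Finset.mem_map, Finset.mem_filter]
    rintro _ ⟨u, ⟨-, hu⟩, rfl⟩ _ ⟨v, ⟨-, hv⟩, rfl⟩
    exact hcolor ⟨u, hS u u.2⟩ ⟨v, hS v v.2⟩ (hu.trans hv.symm)

lemma ncard_representations_le {N : ℕ} (hD : discrim a b c < 0) (hn : n ≠ 0)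
    (h : WedgeColorable (representations a b c n) (discrim a b c) n N) :
    (representations a b c n).ncard ≤ (4 * (discrim a b c).natAbs + 1) ^ 2 * N := by
  have finite : (representations a b c n).Finite := by
    by_contra infinite
    obtain ⟨S, hS, hcard⟩ := Set.Infinite.exists_subset_card_eq infinite
      ((4 * (discrim a b c).natAbs + 1) ^ 2 * N + 1)
    have := card_le_of_wedgeColorable hD hn h fun v hv => hS hv
    omega
  rw [Set.ncard_eq_toFinset_card _ finite]
  exact card_le_of_wedgeColorable hD hn h fun v hv => finite.mem_toFinset.1 hv

end CountingRepresentations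

section SpanPart

variable {P : Set ℕ} {n : ℕ}

/-- The largest divisor of `n` in `⟨P⟩`, that is, the part of `n` composed of the primes in `P`
(equal to `1` for `n = 0`). -/
noncomputable def spanPart (P : Set ℕ) (n : ℕ) : ℕ :=
  (n.factorization.filter (· ∈ P)).prod (· ^ ·)

lemma prime_of_mem_support_filter_factorization {p : ℕ}
    (hp : p ∈ (n.factorization.filter (· ∈ P)).support) : p.Prime := by
  rw [Finsupp.support_filter] at hp
  exact Nat.prime_of_mem_primeFactors (Finset.mem_filter.1 hp).1

lemma factorization_spanPart (P : Set ℕ) (n : ℕ) :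
    (spanPart P n).factorization = n.factorization.filter (· ∈ P) :=
  Nat.prod_pow_factorization_eq_self fun _ => prime_of_mem_support_filter_factorization

lemma spanPart_ne_zero (P : Set ℕ) (n : ℕ) : spanPart P n ≠ 0 :=
  Finset.prod_ne_zero_iff.2 fun _ hp =>
    pow_ne_zero _ (prime_of_mem_support_filter_factorization hp).ne_zero

lemma spanPart_mul_spanPart_compl (hn : n ≠ 0) : spanPart P n * spanPart Pᶜ n = n := by
  refine Nat.eq_of_factorization_eq
    (mul_ne_zero (spanPart_ne_zero P n) (spanPart_ne_zero Pᶜ n)) hn fun p => ?_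
  rw [Nat.factorization_mul (spanPart_ne_zero P n) (spanPart_ne_zero Pᶜ n),
    factorization_spanPart, factorization_spanPart]
  simp

lemma inSpan_of_dvd_spanPart {e : ℕ} (he : e ∣ spanPart P n) : inSpan P e := by
  intro p hp hpe
  have := hp.factorization_pos_of_dvd (spanPart_ne_zero P n) (hpe.trans he)
  rw [factorization_spanPart, Finsupp.filter_apply] at this
  by_contra hpP
  simp [hpP] at this

lemma prod_primeFactors_le_card_divisors_inSpan (P : Set ℕ) (hn : n ≠ 0) :
    ∏ p ∈ n.primeFactors, (if p ∈ P then n.factorization p + 1 else 1) ≤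
      (n.divisors.filter fun e => inSpan P e).card := by
  have divisors_subset : (spanPart P n).divisors ⊆ n.divisors.filter fun e => inSpan P e :=
    fun e he => by
      have e_dvd := Nat.dvd_of_mem_divisors he
      exact Finset.mem_filter.2 ⟨Nat.mem_divisors.2 ⟨e_dvd.trans
        ⟨_, (spanPart_mul_spanPart_compl hn).symm⟩, hn⟩, inSpan_of_dvd_spanPart e_dvd⟩
  refine le_trans (le_of_eq ?_) (Finset.card_le_card divisors_subset)
  rw [Nat.card_divisors (spanPart_ne_zero P n), ← Nat.support_factorization (spanPart P n),
    factorization_spanPart, Finsupp.support_filter, Finset.prod_filter,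
    Nat.support_factorization]
  refine Finset.prod_congr rfl fun p _ => ?_
  split_ifs with hpP <;> simp [hpP]

lemma isSquare_spanPart (heven : ∀ p : ℕ, p.Prime → p ∈ P → Even (n.factorization p)) :
    IsSquare (spanPart P n) := by
  rw [spanPart, Finsupp.prod]
  refine Finset.isSquare_prod _ fun p hp => ?_
  rw [Finsupp.support_filter, Finset.mem_filter] at hp
  rw [Finsupp.filter_apply_pos _ _ hp.2]
  exact (heven p (Nat.prime_of_mem_primeFactors hp.1) hp.2).isSquare_pow p

lemma exists_inSpan_sq_dvd (hn : n ≠ 0)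
    (heven : ∀ p : ℕ, p.Prime → p ∉ P → Even (n.factorization p)) :
    ∃ m ∈ n.divisors, inSpan ({p : ℕ | p.Prime} \ P) m ∧ m ^ 2 ∣ n ∧ inSpan P (n / m ^ 2) := by
  obtain ⟨m, hm⟩ := (isSquare_iff_exists_sq _).1 (isSquare_spanPart (P := Pᶜ) heven)
  have factorization : n = spanPart P n * m ^ 2 := by rw [← hm, spanPart_mul_spanPart_compl hn]
  have sq_dvd : m ^ 2 ∣ n := ⟨_, factorization.trans (mul_comm _ _)⟩
  have m_dvd_sq : m ∣ m ^ 2 := dvd_pow_self m two_ne_zero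
  refine ⟨m, Nat.mem_divisors.2 ⟨m_dvd_sq.trans sq_dvd, hn⟩, fun p hp hpm => ⟨hp, ?_⟩, sq_dvd, ?_⟩
  · exact inSpan_of_dvd_spanPart (hm ▸ m_dvd_sq) p hp hpm
  · have sq_pos : 0 < m ^ 2 := Nat.pos_of_ne_zero (hm ▸ spanPart_ne_zero Pᶜ n)
    rw [Nat.div_eq_of_eq_mul_left sq_pos factorization]
    exact inSpan_of_dvd_spanPart dvd_rfl

end SpanPart

section Majorant

variable {a b c D : ℤ} {P : Set ℕ} {n : ℕ}

/-- The constant `C(D)`: a bound for the representations sharing one colour at every prime, times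
the surplus of colours at the primes dividing `D`. -/
def majorantConst (D : ℤ) : ℕ :=
  (4 * D.natAbs + 1) ^ 2 * ∏ p ∈ D.natAbs.primeFactors, ramifiedColors D p

lemma majorantConst_pos (D : ℤ) : 0 < majorantConst D :=
  Nat.mul_pos (by positivity) <| Finset.prod_pos fun _ hp =>
    one_le_ramifiedColors D (Nat.prime_of_mem_primeFactors hp)

lemma prod_ramifiedColors_le (hD : D ≠ 0) (n : ℕ) :
    ∏ p ∈ n.primeFactors, ramifiedColors D p ≤
      ∏ p ∈ D.natAbs.primeFactors, ramifiedColors D p := by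
  rw [← Finset.prod_filter_of_ne (p := fun p : ℕ => (p : ℤ) ∣ D) fun p _ hp => by
    by_contra hpD
    exact hp (if_neg hpD)]
  refine Finset.prod_le_prod_of_subset_of_one_le' (fun p hp => ?_) fun p hp _ =>
    one_le_ramifiedColors D (Nat.prime_of_mem_primeFactors hp)
  obtain ⟨hpn, hpD⟩ := Finset.mem_filter.1 hp
  exact Nat.mem_primeFactors.2 ⟨Nat.prime_of_mem_primeFactors hpn, Int.natCast_dvd.1 hpD,
    Int.natAbs_ne_zero.2 hD⟩

lemma ncard_representations_le_card_divisors (hD : discrim a b c < 0)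
    (hP : ∀ p : ℕ, p.Prime → IsSquare ((discrim a b c : ℤ) : ZMod (4 * p)) → p ∈ P)
    (hn : n ≠ 0) : (representations a b c n).ncard ≤
      majorantConst (discrim a b c) * (n.divisors.filter fun e => inSpan P e).card := by
  have colorable := wedgeColorable_representations hD.ne hP hn
  rw [Finset.prod_mul_distrib, mul_comm] at colorable
  refine (ncard_representations_le hD (mod_cast hn) colorable).trans ?_
  rw [majorantConst, ← mul_assoc]
  exact Nat.mul_le_mul (Nat.mul_le_mul_left _ (prod_ramifiedColors_le hD.ne n))
    (prod_primeFactors_le_card_divisors_inSpan P hn)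

lemma even_factorization_of_mem_representations {p : ℕ} {u : ℤ × ℤ} (hp : p.Prime) (hn : n ≠ 0)
    (hD : ¬ IsSquare ((discrim a b c : ℤ) : ZMod (4 * p))) (hu : u ∈ representations a b c n) :
    Even (n.factorization p) := by
  obtain ⟨j, -, hj, -⟩ := exists_eq_smul_of_not_isSquare hp hn hD hu
  exact ⟨j, hj.trans (two_mul j)⟩

theorem ncard_representations_le_majorant (hD : discrim a b c < 0)
    (hP : ∀ p : ℕ, p.Prime → IsSquare ((discrim a b c : ℤ) : ZMod (4 * p)) → p ∈ P)
    (hn : n ≠ 0) : ((representations a b c n).ncard : ℝ) ≤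
      majorantConst (discrim a b c) * ((n.divisors.filter fun e => inSpan P e).card : ℝ) *
        ∑ m ∈ n.divisors, if inSpan ({p : ℕ | p.Prime} \ P) m ∧ m ^ 2 ∣ n ∧ inSpan P (n / m ^ 2)
          then (1 : ℝ) else 0 := by
  have summand_nonneg : ∀ m ∈ n.divisors, (0 : ℝ) ≤ if inSpan ({p : ℕ | p.Prime} \ P) m ∧
      m ^ 2 ∣ n ∧ inSpan P (n / m ^ 2) then (1 : ℝ) else 0 := fun m _ => by
    split_ifs <;> norm_num
  rcases (representations a b c n).eq_empty_or_nonempty with empty | ⟨u, hu⟩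
  · rw [empty, Set.ncard_empty, Nat.cast_zero]
    exact mul_nonneg (by positivity) (Finset.sum_nonneg summand_nonneg)
  · obtain ⟨m, m_dvd, hm⟩ := exists_inSpan_sq_dvd (P := P) hn fun p hp hpP =>
      even_factorization_of_mem_representations hp hn (fun h => hpP (hP p hp h)) hu
    refine le_trans ?_ (le_mul_of_one_le_right (by positivity) ?_)
    · exact_mod_cast ncard_representations_le_card_divisors hD hP hn
    · exact (if_pos hm).ge.trans (Finset.single_le_sum summand_nonneg m_dvd)

end Majorant

/-- Matthiesen's divisor-type majorant for the representation
function of a PDBQF of discriminant D. -/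
theorem statement10 (D : ℤ) (hD : D < 0) (hD4 : D % 4 = 0 ∨ D % 4 = 1) :
    ∃ P : Set ℕ,
      (∀ p ∈ P, Nat.Prime p) ∧
      (∀ p q : ℕ, p.Prime → q.Prime → p ∈ P → p % D.natAbs = q % D.natAbs → q ∈ P) ∧
      Tendsto (fun x : ℕ =>
          (((Finset.range x).filter (fun p => p.Prime ∧ p ∈ P)).card : ℝ) /
            (((Finset.range x).filter Nat.Prime).card : ℝ)) atTop (nhds (1 / 2)) ∧
      ∃ C : ℝ, 0 < C ∧
        ∀ f : PDBQF, f.disc = D → ∀ n : ℕ, 1 ≤ n →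
          (f.R (n : ℤ) : ℝ) ≤
            C * ((n.divisors.filter (fun e => inSpan P e)).card : ℝ) *
              ∑ m ∈ n.divisors,
                (if inSpan ({p : ℕ | p.Prime} \ (P ∪ {p : ℕ | p.Prime ∧ (p : ℤ) ∣ D})) m ∧
                    m ^ 2 ∣ n ∧
                    inSpan (P ∪ {p : ℕ | p.Prime ∧ (p : ℤ) ∣ D}) (n / m ^ 2)
                 then (1 : ℝ) else 0) := by
  have : NeZero D.natAbs := ⟨by omega⟩
  refine ⟨splitPrimes D, fun p hp => hp.1, fun p q _ hq => mem_splitPrimes_of_modEq hq,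
    hasPrimeDensity_splitPrimes hD hD4, majorantConst D, mod_cast majorantConst_pos D, ?_⟩
  rintro f rfl n hn
  rw [splitPrimes_union_dvd]
  exact ncard_representations_le_majorant hD
    (fun p hp => mem_splitPrimes_of_isSquare hD hD4 hp) (Nat.one_le_iff_ne_zero.1 hn)
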